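/- Let Δ ⊆ ℝ³ be a 3-dimensional reflexive polytope. Then Σ_θ v(θ)·v(θ*) = 24, where the sum runs over all 1-dimensional faces (edges) θ of Δ, θ* is the dual edge of Δ*, and for an edge θ one has v(θ) = |θ ∩ ℤ³| − 1 (the lattice length). -/

import Mathlib

open MeasureTheory Filter Pointwise

noncomputable section

/-- The canonical embedding of a lattice point of `ℤ^d` into `ℝ^d`. -/
def coeLat {d : ℕ} (n : Fin d → ℤ) : Fin d → ℝ := fun i => (n i : ℝ)

/-- The set of lattice points lying in a subset `S ⊆ ℝ^d`. -/
def latticePoints {d : ℕ} (S : Set (Fin d → ℝ)) : Set (Fin d → ℤ) :=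
  {n | coeLat n ∈ S}

/-- A lattice polytope: the convex hull of finitely many points of `ℤ^d`. -/
def IsLatticePolytope {d : ℕ} (P : Set (Fin d → ℝ)) : Prop :=
  ∃ V : Finset (Fin d → ℤ), P = convexHull ℝ (coeLat '' (V : Set (Fin d → ℤ)))

/-- The dual (polar) body `P* = {y | ⟨y,x⟩ ≥ -1 ∀ x ∈ P}`. -/
def polarDual {d : ℕ} (P : Set (Fin d → ℝ)) : Set (Fin d → ℝ) :=
  {y | ∀ x ∈ P, -1 ≤ ∑ i, y i * x i}

/-- Dimension of a subset of `ℝ^d`: the dimension of its affine span. -/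
def dimSet {d : ℕ} (S : Set (Fin d → ℝ)) : ℕ :=
  Module.finrank ℝ (affineSpan ℝ S).direction

/-- A reflexive polytope: a lattice polytope containing the origin in its interior
whose dual is again a lattice polytope. -/
def IsReflexive {d : ℕ} (P : Set (Fin d → ℝ)) : Prop :=
  IsLatticePolytope P ∧ (0 : Fin d → ℝ) ∈ interior P ∧ IsLatticePolytope (polarDual P)

/-- A (nonempty, exposed) face of dimension `k` of a polytope `P`. -/
def IsFaceOfDim {d : ℕ} (P : Set (Fin d → ℝ)) (k : ℕ) (θ : Set (Fin d → ℝ)) : Prop :=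
  IsExposed ℝ P θ ∧ θ.Nonempty ∧ dimSet θ = k

/-- The dual face `θ* = {y ∈ P* | ⟨y,x⟩ = -1 ∀ x ∈ θ}` of a face `θ` of `P`. -/
def dualFace {d : ℕ} (P θ : Set (Fin d → ℝ)) : Set (Fin d → ℝ) :=
  {y ∈ polarDual P | ∀ x ∈ θ, ∑ i, y i * x i = -1}

/-- The normalized volume of a `k`-dimensional lattice polytope `θ ⊆ ℝ^d`:
`lim_{m → ∞} k! ⬝ |mθ ∩ ℤ^d| / m^k`. -/
def normVol {d : ℕ} (k : ℕ) (θ : Set (Fin d → ℝ)) : ℝ :=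
  limUnder atTop
    (fun m : ℕ => (Nat.factorial k : ℝ) * (latticePoints ((m : ℝ) • θ)).ncard / (m : ℝ) ^ k)

/-! ### Elementary vector algebra -/

def dt (u v : Fin 3 → ℝ) : ℝ := u 0 * v 0 + u 1 * v 1 + u 2 * v 2

def D3 (a b c : Fin 3 → ℝ) : ℝ :=
  a 0 * (b 1 * c 2 - b 2 * c 1) - a 1 * (b 0 * c 2 - b 2 * c 0) + a 2 * (b 0 * c 1 - b 1 * c 0)

def cr (a b : Fin 3 → ℝ) : Fin 3 → ℝ :=
  ![a 1 * b 2 - a 2 * b 1, a 2 * b 0 - a 0 * b 2, a 0 * b 1 - a 1 * b 0]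

lemma D3_eq_dt (a b c : Fin 3 → ℝ) : D3 a b c = dt (cr a b) c := by
  simp [D3, dt, cr]; ring

lemma D3_rot (a b c : Fin 3 → ℝ) : D3 b c a = D3 a b c := by
  simp only [D3]; ring

lemma D3_swap (a b c : Fin 3 → ℝ) : D3 b a c = - D3 a b c := by
  simp only [D3]; ring

lemma dt_sum (u v : Fin 3 → ℝ) : ∑ i, u i * v i = dt u v := by
  simp [dt, Fin.sum_univ_three]

/-- Cramer's rule, functional form. -/
lemma cramer_dt (a b c ξ m : Fin 3 → ℝ) :
    D3 a b c * dt m ξ = D3 b c ξ * dt m a + D3 c a ξ * dt m b + D3 a b ξ * dt m c := by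
  simp only [D3, dt]; ring

lemma pluecker3 (a b c ξ ξ' : Fin 3 → ℝ) :
    D3 b c ξ * D3 c a ξ' - D3 b c ξ' * D3 c a ξ = D3 a b c * D3 ξ ξ' c := by
  simp only [D3]; ring

/-- A generic point of a nonempty open set avoids finitely many affine hyperplanes. -/
lemma exists_generic {E : Type*} [AddCommGroup E] [Module ℝ E] [TopologicalSpace E]
    [ContinuousAdd E] [ContinuousSMul ℝ E] {ι : Type*} (s : Finset ι)
    (f : ι → (E →ₗ[ℝ] ℝ)) (hf : ∀ i, Continuous (f i)) (c : ι → ℝ)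
    (hne : ∀ i ∈ s, f i ≠ 0) (U : Set E) (hU : IsOpen U) (hUn : U.Nonempty) :
    ∃ x ∈ U, ∀ i ∈ s, f i x ≠ c i := by
  classical
  induction s using Finset.induction_on generalizing U with
  | empty => obtain ⟨x, hx⟩ := hUn; exact ⟨x, hx, by simp⟩
  | insert i s his ih =>
    have hopen : IsOpen (U ∩ {x | f i x ≠ c i}) :=
      hU.inter (isOpen_ne_fun (hf i) continuous_const)
    have hn : (U ∩ {x | f i x ≠ c i}).Nonempty := by
      obtain ⟨x0, hx0⟩ := hUn
      by_cases h : f i x0 = c i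
      · have : ∃ e, f i e ≠ 0 := by
          by_contra hcon
          push Not at hcon
          exact hne i (Finset.mem_insert_self _ _) (LinearMap.ext hcon)
        obtain ⟨e, he⟩ := this
        have hc : Continuous (fun t : ℝ => x0 + t • e) := by fun_prop
        have hev : ∀ᶠ t : ℝ in nhds 0, x0 + t • e ∈ U :=
          hc.continuousAt.eventually_mem (by simpa using hU.mem_nhds hx0)
        have hev2 : ∀ᶠ t : ℝ in nhdsWithin 0 {0}ᶜ, x0 + t • e ∈ U :=
          hev.filter_mono nhdsWithin_le_nhds
        obtain ⟨t, ht, ht0⟩ := (hev2.and self_mem_nhdsWithin).exists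
        refine ⟨x0 + t • e, ht, ?_⟩
        have ht1 : t ≠ 0 := ht0
        simp [h, he, ht1]
      · exact ⟨x0, hx0, h⟩
    obtain ⟨x, hx, hx2⟩ := ih (fun j hj => hne j (Finset.mem_insert_of_mem hj)) _ hopen hn
    refine ⟨x, hx.1, fun j hj => ?_⟩
    rcases Finset.mem_insert.1 hj with rfl | hj
    · exact hx.2
    · exact hx2 j hj

/-! ### Cyclic families of oriented triples -/

/-- A closed oriented family of triples. -/
structure Cyc (M : Finset ((Fin 3 → ℤ) × (Fin 3 → ℤ) × (Fin 3 → ℤ))) : Prop where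
  rot : ∀ a b c, (a, b, c) ∈ M → (b, c, a) ∈ M
  uni : ∀ a b c, (a, b, c) ∈ M → D3 (coeLat a) (coeLat b) (coeLat c) = 1
  adj : ∀ a b c, (a, b, c) ∈ M → ∃ d, (b, a, d) ∈ M
  uniq : ∀ a b c c', (a, b, c) ∈ M → (a, b, c') ∈ M → c = c'

variable {M : Finset ((Fin 3 → ℤ) × (Fin 3 → ℤ) × (Fin 3 → ℤ))}

lemma Cyc.sum_rot (h : Cyc M) (F : (Fin 3 → ℤ) → (Fin 3 → ℤ) → (Fin 3 → ℤ) → ℝ) :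
    ∑ t ∈ M, F t.2.1 t.2.2 t.1 = ∑ t ∈ M, F t.1 t.2.1 t.2.2 := by
  refine Finset.sum_nbij' (fun t => (t.2.1, t.2.2, t.1)) (fun t => (t.2.2, t.1, t.2.1)) ?_ ?_ ?_ ?_ ?_
  · rintro ⟨a, b, c⟩ ht; exact h.rot _ _ _ ht
  · rintro ⟨a, b, c⟩ ht; exact h.rot _ _ _ (h.rot _ _ _ ht)
  · rintro ⟨a, b, c⟩ ht; rfl
  · rintro ⟨a, b, c⟩ ht; rfl
  · rintro ⟨a, b, c⟩ ht; rfl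

lemma Cyc.sum_swap (h : Cyc M) (K : (Fin 3 → ℤ) → (Fin 3 → ℤ) → ℝ) :
    ∑ t ∈ M, K t.2.1 t.1 = ∑ t ∈ M, K t.1 t.2.1 := by
  have h' : ∀ t : (Fin 3 → ℤ) × (Fin 3 → ℤ) × (Fin 3 → ℤ), ∃ d, t ∈ M → (t.2.1, t.1, d) ∈ M := by
    rintro ⟨a, b, c⟩
    by_cases ht : (a, b, c) ∈ M
    · obtain ⟨d, hd⟩ := h.adj _ _ _ ht; exact ⟨d, fun _ => hd⟩
    · exact ⟨0, fun h => absurd h ht⟩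
  choose d hd using h'
  refine Finset.sum_nbij' (fun t => (t.2.1, t.1, d t)) (fun t => (t.2.1, t.1, d t)) ?_ ?_ ?_ ?_ ?_
  · rintro t ht; exact hd t ht
  · rintro t ht; exact hd t ht
  · rintro ⟨a, b, c⟩ ht
    have h1 := hd _ ht
    have h2 := hd _ h1
    have := h.uniq _ _ _ _ ht h2
    simp only [Prod.mk.injEq, true_and]; exact this.symm
  · rintro ⟨a, b, c⟩ ht
    have h1 := hd _ ht
    have h2 := hd _ h1
    have := h.uniq _ _ _ _ ht h2
    simp only [Prod.mk.injEq, true_and]; exact this.symm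
  · rintro ⟨a, b, c⟩ ht; rfl

lemma Cyc.sum_antisymm (h : Cyc M) (K : (Fin 3 → ℤ) → (Fin 3 → ℤ) → ℝ)
    (hK : ∀ a b c, (a, b, c) ∈ M → K b a = - K a b) :
    ∑ t ∈ M, K t.1 t.2.1 = 0 := by
  have h1 := h.sum_swap K
  have h2 : ∑ t ∈ M, K t.2.1 t.1 = - ∑ t ∈ M, K t.1 t.2.1 := by
    rw [← Finset.sum_neg_distrib]
    refine Finset.sum_congr rfl ?_
    rintro ⟨a, b, c⟩ ht
    exact hK a b c ht
  linarith

def pos01 (x : ℝ) : ℝ := if 0 < x then 1 else 0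
def neg01 (x : ℝ) : ℝ := if x < 0 then 1 else 0

def chi (x μ : ℝ) : ℝ := pos01 x - neg01 μ

lemma pos01_neg {x : ℝ} (hx : x ≠ 0) : pos01 (-x) = 1 - pos01 x := by
  unfold pos01
  rcases lt_or_gt_of_ne hx with h | h
  · simp [h, not_lt.2 h.le]
  · simp [h, not_lt.2 h.le]

/-- Telescoping along three distinct times. -/
lemma telescope3 (p q r p' q' r' α β γ t1 t2 t3 : ℝ) (h12 : t1 ≠ t2) (h13 : t1 ≠ t3) (h23 : t2 ≠ t3) :
    (p - α) * (q - β) * (r - γ) - (p' - α) * (q' - β) * (r' - γ) =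
      (p - p') * ((if t1 < t2 then q else q') - β) * ((if t1 < t3 then r else r') - γ) +
      (q - q') * ((if t2 < t3 then r else r') - γ) * ((if t2 < t1 then p else p') - α) +
      (r - r') * ((if t3 < t1 then p else p') - α) * ((if t3 < t2 then q else q') - β) := by
  rcases lt_or_gt_of_ne h12 with h | h <;> rcases lt_or_gt_of_ne h13 with h' | h' <;>
    rcases lt_or_gt_of_ne h23 with h'' | h'' <;>
    first
    | (exfalso; linarith)
    | (simp only [h, h', h'', not_lt.2 h.le, not_lt.2 h'.le, not_lt.2 h''.le, if_true, if_false]; ring)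

/-- sign at the crossing point -/
lemma crossing (x x' y y' : ℝ) (hxx : x ≠ x') (hyy : y ≠ y')
    (hcr : x * y' - x' * y ≠ 0) :
    (pos01 x - pos01 x') * pos01 ((x * y' - x' * y) / (x - x')) =
    (pos01 x - pos01 x') * (if x / (x - x') < y / (y - y') then pos01 y else pos01 y') := by
  have hx1 : x - x' ≠ 0 := sub_ne_zero.2 hxx
  have hy1 : y - y' ≠ 0 := sub_ne_zero.2 hyy
  by_cases hs : (0 < x ↔ 0 < x')
  · have : pos01 x = pos01 x' := by unfold pos01; simp [hs]
    simp [this]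
  congr 1
  have ht0 : 0 ≤ x / (x - x') ∧ x / (x - x') ≤ 1 := by
    by_cases h0 : 0 < x
    · have h1 : x' ≤ 0 := by by_contra h; push Not at h; exact hs ⟨fun _ => h, fun _ => h0⟩
      constructor
      · apply div_nonneg h0.le; linarith
      · rw [div_le_one (by linarith)]; linarith
    · have h1 : 0 < x' := by by_contra h; exact hs ⟨fun h' => absurd h' h0, fun h' => absurd h' h⟩
      push Not at h0
      constructor
      · apply div_nonneg_of_nonpos h0; linarith
      · rw [div_le_one_of_neg (by linarith)]; linarith
  set t := x / (x - x') with ht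
  set τ := y / (y - y') with hτ
  have e1 : (x * y' - x' * y) / (x - x') = (y - y') * (τ - t) := by
    rw [ht, hτ]; field_simp; ring
  have e2 : y = (y - y') * τ := by rw [hτ]; field_simp
  have e3 : y' = (y - y') * (τ - 1) := by
    have : (y - y') * (τ - 1) = (y - y') * τ - (y - y') := by ring
    rw [this, ← e2]; ring
  have hne : τ ≠ t := by
    intro h
    have : (x * y' - x' * y) / (x - x') = 0 := by rw [e1, h]; ring
    rcases div_eq_zero_iff.1 this with h | h
    · exact hcr h
    · exact hx1 h
  rw [e1]
  have key : ∀ w, 0 < w → (0 < (y - y') * w ↔ 0 < y - y') := fun w hw =>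
    mul_pos_iff_of_pos_right hw
  have key2 : ∀ w, w < 0 → (0 < (y - y') * w ↔ y - y' < 0) := fun w hw => by
    constructor
    · intro h; nlinarith
    · intro h; exact mul_pos_of_neg_of_neg h hw
  by_cases hlt : t < τ
  · rw [if_pos hlt]
    have : (0 < y ↔ 0 < y - y') := by
      conv_lhs => rw [e2]
      exact key _ (by linarith [ht0.1])
    unfold pos01
    simp only [key _ (show 0 < τ - t by linarith), this]
  · rw [if_neg hlt]
    have hlt' : τ < t := lt_of_le_of_ne (not_lt.1 hlt) hne
    have : (0 < y' ↔ y - y' < 0) := by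
      conv_lhs => rw [e3]
      exact key2 _ (by linarith [ht0.2])
    unfold pos01
    simp only [key2 _ (show τ - t < 0 by linarith), this]


def chiProd (ξ m : Fin 3 → ℝ) (a b c : Fin 3 → ℝ) : ℝ :=
  chi (D3 b c ξ) (dt m a) * chi (D3 c a ξ) (dt m b) * chi (D3 a b ξ) (dt m c)

def Ncount (M : Finset ((Fin 3 → ℤ) × (Fin 3 → ℤ) × (Fin 3 → ℤ))) (ξ m : Fin 3 → ℝ) : ℝ :=
  ∑ t ∈ M, chiProd ξ m (coeLat t.1) (coeLat t.2.1) (coeLat t.2.2)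

/-- the wall-crossing contribution of the wall spanned by `b`, `c` -/
def wallK (ξ ξ' m b c : Fin 3 → ℝ) : ℝ :=
  (pos01 (D3 b c ξ) - pos01 (D3 b c ξ')) *
    (pos01 (D3 ξ ξ' c / (D3 b c ξ - D3 b c ξ')) - neg01 (dt m b)) *
    (pos01 (- D3 ξ ξ' b / (D3 b c ξ - D3 b c ξ')) - neg01 (dt m c))

lemma wallK_antisymm (ξ ξ' m b c : Fin 3 → ℝ) (h1 : D3 b c ξ ≠ 0) (h2 : D3 b c ξ' ≠ 0) :
    wallK ξ ξ' m c b = - wallK ξ ξ' m b c := by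
  unfold wallK
  rw [D3_swap b c ξ, D3_swap b c ξ', pos01_neg h1, pos01_neg h2]
  have e : -D3 b c ξ - -D3 b c ξ' = -(D3 b c ξ - D3 b c ξ') := by ring
  rw [e, div_neg, div_neg, ← neg_div, neg_div _ (D3 ξ ξ' c), neg_neg]
  ring

lemma wall_identity (a b c ξ ξ' m : Fin 3 → ℝ) (h : D3 a b c = 1)
    (hx : D3 b c ξ ≠ D3 b c ξ') (hy : D3 c a ξ ≠ D3 c a ξ') (hz : D3 a b ξ ≠ D3 a b ξ')
    (ha : D3 ξ ξ' a ≠ 0) (hb : D3 ξ ξ' b ≠ 0) (hc : D3 ξ ξ' c ≠ 0) :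
    chiProd ξ m a b c - chiProd ξ' m a b c =
      wallK ξ ξ' m b c + wallK ξ ξ' m c a + wallK ξ ξ' m a b := by
  have pc := pluecker3 a b c ξ ξ'
  have pa := pluecker3 b c a ξ ξ'
  have pb := pluecker3 c a b ξ ξ'
  have hrot1 : D3 b c a = 1 := by rw [D3_rot, h]
  have hrot2 : D3 c a b = 1 := by rw [D3_rot, hrot1]
  rw [h, one_mul] at pc
  rw [hrot1, one_mul] at pa
  rw [hrot2, one_mul] at pb
  unfold chiProd wallK chi
  rw [← pa, ← pb, ← pc]
  rw [← pa] at ha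
  rw [← pb] at hb
  rw [← pc] at hc
  set x := D3 b c ξ
  set x' := D3 b c ξ'
  set y := D3 c a ξ
  set y' := D3 c a ξ'
  set z := D3 a b ξ
  set z' := D3 a b ξ'
  set α := neg01 (dt m a)
  set β := neg01 (dt m b)
  set γ := neg01 (dt m c)
  have hx1 : x - x' ≠ 0 := sub_ne_zero.2 hx
  have hy1 : y - y' ≠ 0 := sub_ne_zero.2 hy
  have hz1 : z - z' ≠ 0 := sub_ne_zero.2 hz
  have t12 : x / (x - x') ≠ y / (y - y') := by
    rw [Ne, div_eq_div_iff hx1 hy1]; intro h; apply hc; linarith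
  have t13 : x / (x - x') ≠ z / (z - z') := by
    rw [Ne, div_eq_div_iff hx1 hz1]; intro h; apply hb; linarith
  have t23 : y / (y - y') ≠ z / (z - z') := by
    rw [Ne, div_eq_div_iff hy1 hz1]; intro h; apply ha; linarith
  rw [telescope3 _ _ _ _ _ _ α β γ _ _ _ t12 t13 t23]
  have n1 : -(z * x' - z' * x) = x * z' - x' * z := by ring
  have n2 : -(x * y' - x' * y) = y * x' - y' * x := by ring
  have n3 : -(y * z' - y' * z) = z * y' - z' * y := by ring
  rw [n1, n2, n3]
  have c1 := crossing x x' y y' hx hy hc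
  have c2 := crossing x x' z z' hx hz (by rw [← n1]; exact neg_ne_zero.2 hb)
  have c3 := crossing y y' z z' hy hz ha
  have c4 := crossing y y' x x' hy hx (by rw [← n2]; exact neg_ne_zero.2 hc)
  have c5 := crossing z z' x x' hz hx hb
  have c6 := crossing z z' y y' hz hy (by rw [← n3]; exact neg_ne_zero.2 ha)
  have gen : ∀ P A B A' B' β γ : ℝ, P * A = P * A' → P * B = P * B' →
      P * (A' - β) * (B' - γ) = P * (A - β) * (B - γ) := by
    intro P A B A' B' β γ h1 h2
    linear_combination (-(B' - γ)) * h1 - (A - β) * h2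
  rw [gen _ _ _ _ _ β γ c1 c2, gen _ _ _ _ _ γ α c3 c4, gen _ _ _ _ _ α β c5 c6]

/-- generic vectors -/
def Gen (M : Finset ((Fin 3 → ℤ) × (Fin 3 → ℤ) × (Fin 3 → ℤ))) (ξ : Fin 3 → ℝ) : Prop :=
  ∀ t ∈ M, D3 (coeLat t.1) (coeLat t.2.1) ξ ≠ 0

lemma Cyc.N_indep (h : Cyc M) (ξ ξ' m : Fin 3 → ℝ) (hξ : Gen M ξ) (hξ' : Gen M ξ')
    (h1 : ∀ t ∈ M, D3 (coeLat t.1) (coeLat t.2.1) ξ ≠ D3 (coeLat t.1) (coeLat t.2.1) ξ')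
    (h2 : ∀ t ∈ M, D3 ξ ξ' (coeLat t.1) ≠ 0) :
    Ncount M ξ m = Ncount M ξ' m := by
  rw [← sub_eq_zero]
  unfold Ncount
  rw [← Finset.sum_sub_distrib]
  have e : ∀ t ∈ M, chiProd ξ m (coeLat t.1) (coeLat t.2.1) (coeLat t.2.2) -
      chiProd ξ' m (coeLat t.1) (coeLat t.2.1) (coeLat t.2.2) =
      wallK ξ ξ' m (coeLat t.2.1) (coeLat t.2.2) + wallK ξ ξ' m (coeLat t.2.2) (coeLat t.1) +
      wallK ξ ξ' m (coeLat t.1) (coeLat t.2.1) := by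
    rintro ⟨a, b, c⟩ ht
    have r1 := h.rot _ _ _ ht
    have r2 := h.rot _ _ _ r1
    exact wall_identity _ _ _ ξ ξ' m (h.uni _ _ _ ht) (h1 _ r1) (h1 _ r2) (h1 _ ht)
      (h2 _ ht) (h2 _ r1) (h2 _ r2)
  rw [Finset.sum_congr rfl e, Finset.sum_add_distrib, Finset.sum_add_distrib]
  have s1 := h.sum_rot (fun a b c => wallK ξ ξ' m (coeLat a) (coeLat b))
  have s2 := h.sum_rot (fun a b c => wallK ξ ξ' m (coeLat b) (coeLat c))
  rw [s2, s1, h.sum_antisymm (fun a b => wallK ξ ξ' m (coeLat a) (coeLat b))]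
  · simp
  · intro a b c ht
    exact wallK_antisymm _ _ _ _ _ (hξ _ ht) (hξ' _ ht)

/-- `D3 a b` as a linear map in the last variable -/
def D3lin (a b : Fin 3 → ℝ) : (Fin 3 → ℝ) →ₗ[ℝ] ℝ where
  toFun := D3 a b
  map_add' x y := by simp only [D3, Pi.add_apply]; ring
  map_smul' r x := by simp only [D3, Pi.smul_apply, smul_eq_mul, RingHom.id_apply]; ring

lemma D3_cont (a b : Fin 3 → ℝ) : Continuous (D3lin a b) := by
  change Continuous (fun x => D3 a b x)
  unfold D3; fun_prop

lemma D3lin_ne {a b : Fin 3 → ℝ} (c : Fin 3 → ℝ) (h : D3 a b c ≠ 0) : D3lin a b ≠ 0 := by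
  intro h0
  exact h (LinearMap.congr_fun h0 c)

/-- generic points exist in open sets, relative to a previous generic point -/
lemma Cyc.exists_gen (h : Cyc M) (ξ : Fin 3 → ℝ) (hξ : Gen M ξ)
    (U : Set (Fin 3 → ℝ)) (hU : IsOpen U) (hne : U.Nonempty) :
    ∃ ξ' ∈ U, Gen M ξ' ∧
      (∀ t ∈ M, D3 (coeLat t.1) (coeLat t.2.1) ξ ≠ D3 (coeLat t.1) (coeLat t.2.1) ξ') ∧
      (∀ t ∈ M, D3 ξ ξ' (coeLat t.1) ≠ 0) := by
  have hM : ∀ t ∈ M, D3lin (coeLat t.1) (coeLat t.2.1) ≠ 0 := by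
    rintro ⟨a, b, c⟩ ht
    exact D3lin_ne (coeLat c) (by rw [h.uni _ _ _ ht]; norm_num)
  obtain ⟨x, hx, hx'⟩ := exists_generic (M ×ˢ (Finset.univ : Finset (Fin 3)))
    (fun p => if p.2 = 2 then D3lin (coeLat p.1.1) ξ else
      D3lin (coeLat p.1.1) (coeLat p.1.2.1))
    (fun p => by split_ifs <;> exact D3_cont _ _)
    (fun p => if p.2 = 1 then D3 (coeLat p.1.1) (coeLat p.1.2.1) ξ else 0)
    (by
      rintro ⟨t, i⟩ hp
      have ht := (Finset.mem_product.1 hp).1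
      dsimp only at ht ⊢
      split_ifs
      · apply D3lin_ne (coeLat t.2.1)
        have := hξ t ht
        intro h0; apply this
        rw [← neg_eq_zero, ← h0]; simp only [D3]; ring
      · exact hM t ht) U hU hne
  refine ⟨x, hx, fun t ht => ?_, fun t ht => ?_, fun t ht => ?_⟩
  · exact hx' (t, 0) (by simp [ht])
  · exact (hx' (t, 1) (by simp [ht])).symm
  · have := hx' (t, 2) (by simp [ht])
    rw [D3_rot]
    exact this

lemma coeLat_dt_cont (m : Fin 3 → ℝ) : Continuous (fun x => dt m x) := by
  unfold dt; fun_prop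

lemma Cyc.N_zero (h : Cyc M) (ξ m : Fin 3 → ℝ) (hξ : Gen M ξ) (hm : m ≠ 0) :
    Ncount M ξ m = 0 := by
  obtain ⟨ξ', hU, g, h1, h2⟩ := h.exists_gen ξ hξ {x | dt m x < 0}
    (isOpen_lt (coeLat_dt_cont m) continuous_const) (by
      refine ⟨-m, ?_⟩
      have : ∃ i, m i ≠ 0 := by
        by_contra hcon; push Not at hcon; exact hm (funext hcon)
      obtain ⟨i, hi⟩ := this
      have hpos : 0 < m 0 ^ 2 + m 1 ^ 2 + m 2 ^ 2 := by
        fin_cases i <;> simp at hi <;> positivity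
      simp only [Set.mem_ofPred_eq, dt, Pi.neg_apply]; nlinarith)
  rw [h.N_indep ξ ξ' m hξ g h1 h2]
  unfold Ncount
  apply Finset.sum_eq_zero
  rintro ⟨a, b, c⟩ ht
  by_contra hne
  have hU' : dt m ξ' < 0 := hU
  have hcr := cramer_dt (coeLat a) (coeLat b) (coeLat c) ξ' m
  rw [h.uni _ _ _ ht] at hcr
  have key : ∀ x μ : ℝ, chi x μ ≠ 0 → 0 ≤ x * μ := by
    intro x μ hx
    unfold chi pos01 neg01 at hx
    by_cases h1 : 0 < x <;> by_cases h2 : μ < 0 <;> simp [h1, h2] at hx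
    · push Not at h2; positivity
    · push Not at h1; nlinarith
  simp only [chiProd] at hne
  have k1 := key _ _ (left_ne_zero_of_mul (left_ne_zero_of_mul hne))
  have k2 := key _ _ (right_ne_zero_of_mul (left_ne_zero_of_mul hne))
  have k3 := key _ _ (right_ne_zero_of_mul hne)
  linarith

lemma Cyc.N_deg (h : Cyc M) (U : Set (Fin 3 → ℝ)) (hU : IsOpen U) (hUn : U.Nonempty)
    (hdeg : ∀ ξ ∈ U, Gen M ξ → Ncount M ξ 0 = 3) (ξ : Fin 3 → ℝ) (hξ : Gen M ξ) :
    Ncount M ξ 0 = 3 := by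
  obtain ⟨ξ', hU, g, h1, h2⟩ := h.exists_gen ξ hξ U hU hUn
  rw [h.N_indep ξ ξ' 0 hξ g h1 h2]
  exact hdeg _ hU g


/-! ### Generating functions -/

lemma hasSum_chi (x : ℝ) (hx : x ≠ 0) :
    HasSum (fun n : ℤ => chi x (n : ℝ) * Real.exp (-(x * n))) (1 / (1 - Real.exp (-x))) := by
  have half : HasSum (fun n : ℤ => if 0 ≤ n then Real.exp (-|x|) ^ n.toNat else 0)
      (1 / (1 - Real.exp (-|x|))) := by
    have hg := hasSum_geometric_of_lt_one (Real.exp_nonneg (-|x|))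
      (Real.exp_lt_one_iff.2 (by simpa using hx))
    rw [← one_div] at hg
    have hinj : Function.Injective (fun n : ℕ => (n : ℤ)) := Nat.cast_injective
    rw [← hinj.hasSum_iff]
    · convert hg using 2
      simp
    · intro n hn
      rw [if_neg]
      intro h0
      exact hn ⟨n.toNat, by simp [h0]⟩
  rcases lt_or_gt_of_ne hx with h | h
  · -- negative: use n ↦ -1 - n
    have e : HasSum (fun n : ℤ => (-Real.exp x) * (if 0 ≤ -1 - n then Real.exp (-|x|) ^ (-1 - n).toNat else 0))
        ((-Real.exp x) * (1 / (1 - Real.exp (-|x|)))) := by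
      apply HasSum.mul_left
      have := (Equiv.hasSum_iff (Equiv.subLeft (-1 : ℤ))).2 half
      simpa only [Function.comp_def, Equiv.subLeft_apply] using this
    have hv : (-Real.exp x) * (1 / (1 - Real.exp (-|x|))) = 1 / (1 - Real.exp (-x)) := by
      rw [abs_of_neg h, neg_neg]
      have h1 : 1 - Real.exp x ≠ 0 := by
        have := Real.exp_lt_one_iff.2 h; linarith
      have h2 : 1 - Real.exp (-x) ≠ 0 := by
        have := Real.one_lt_exp_iff.2 (show 0 < -x by linarith); linarith
      have h3 : Real.exp x * Real.exp (-x) = 1 := by rw [← Real.exp_add]; simp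
      field_simp
      linarith
    rw [hv] at e
    convert e using 2 with n
    unfold chi pos01 neg01
    rw [if_neg (not_lt.2 h.le), abs_of_neg h, neg_neg]
    by_cases hn : n < 0
    · have hn' : (n : ℝ) < 0 := by exact_mod_cast hn
      rw [if_pos hn', if_pos (by omega), ← Real.exp_nat_mul]
      have : ((-1 - n).toNat : ℝ) = -1 - (n : ℝ) := by
        have h2 : (((-1 - n).toNat : ℤ) : ℝ) = ((-1 - n : ℤ) : ℝ) := by
          rw [Int.toNat_of_nonneg (by omega)]
        push_cast at h2; exact h2
      rw [this, neg_mul, ← Real.exp_add]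
      have : x + (-1 - (n : ℝ)) * x = -(x * n) := by ring
      rw [this]; ring
    · have hn' : ¬ (n : ℝ) < 0 := by exact_mod_cast hn
      rw [if_neg hn', if_neg (by omega)]; ring
  · rw [abs_of_pos h] at half
    convert half using 2 with n
    unfold chi pos01 neg01
    rw [if_pos h]
    by_cases hn : n < 0
    · have hn' : (n : ℝ) < 0 := by exact_mod_cast hn
      rw [if_pos hn', if_neg (by omega)]; ring
    · have hn' : ¬ (n : ℝ) < 0 := by exact_mod_cast hn
      rw [if_neg hn', if_pos (by omega), ← Real.exp_nat_mul]
      have : (n.toNat : ℝ) = (n : ℝ) := by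
        have h2 : ((n.toNat : ℤ) : ℝ) = (n : ℝ) := by
          rw [Int.toNat_of_nonneg (by omega)]
        exact_mod_cast h2
      rw [this]
      have : (n : ℝ) * -x = -(x * n) := by ring
      rw [this]; ring

lemma hasSum_prod3 (f g k : ℤ → ℝ) (A B C : ℝ) (hf : HasSum f A) (hg : HasSum g B)
    (hk : HasSum k C) : HasSum (fun p : ℤ × ℤ × ℤ => f p.1 * g p.2.1 * k p.2.2) (A * B * C) := by
  have s1 : Summable (fun p : ℤ × ℤ => g p.1 * k p.2) :=
    summable_mul_of_summable_norm hg.summable.norm hk.summable.norm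
  have h1 : HasSum (fun p : ℤ × ℤ => g p.1 * k p.2) (B * C) := hg.mul hk s1
  have s2 : Summable (fun p : ℤ × ℤ × ℤ => f p.1 * (g p.2.1 * k p.2.2)) :=
    summable_mul_of_summable_norm (g := fun p : ℤ × ℤ => g p.1 * k p.2) hf.summable.norm s1.norm
  have h2 := hf.mul h1 s2
  have e : A * B * C = A * (B * C) := mul_assoc _ _ _
  rw [e]
  simpa only [mul_assoc] using h2

def Dz (a b c : Fin 3 → ℤ) : ℤ :=
  a 0 * (b 1 * c 2 - b 2 * c 1) - a 1 * (b 0 * c 2 - b 2 * c 0) + a 2 * (b 0 * c 1 - b 1 * c 0)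

def dz (u v : Fin 3 → ℤ) : ℤ := u 0 * v 0 + u 1 * v 1 + u 2 * v 2

def crz (a b : Fin 3 → ℤ) : Fin 3 → ℤ :=
  ![a 1 * b 2 - a 2 * b 1, a 2 * b 0 - a 0 * b 2, a 0 * b 1 - a 1 * b 0]

lemma D3_coe (a b c : Fin 3 → ℤ) : D3 (coeLat a) (coeLat b) (coeLat c) = (Dz a b c : ℝ) := by
  simp [D3, Dz, coeLat]

lemma dt_coe (a b : Fin 3 → ℤ) : dt (coeLat a) (coeLat b) = (dz a b : ℝ) := by
  simp [dt, dz, coeLat]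

/-- For a unimodular triple, evaluation on the triple is a bijection of the dual lattice. -/
def evalEquiv (a b c : Fin 3 → ℤ) (h : Dz a b c = 1) : (Fin 3 → ℤ) ≃ ℤ × ℤ × ℤ where
  toFun m := (dz m a, dz m b, dz m c)
  invFun p := fun i => p.1 * crz b c i + p.2.1 * crz c a i + p.2.2 * crz a b i
  left_inv m := by
    funext i
    have key : dz m a * crz b c i + dz m b * crz c a i + dz m c * crz a b i = Dz a b c * m i := by
      fin_cases i <;> simp [dz, crz, Dz] <;> ring
    rw [h, one_mul] at key
    exact key
  right_inv p := by
    obtain ⟨x, y, z⟩ := p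
    have k1 : dz (fun i => x * crz b c i + y * crz c a i + z * crz a b i) a = Dz a b c * x := by
      simp [dz, crz, Dz]; ring
    have k2 : dz (fun i => x * crz b c i + y * crz c a i + z * crz a b i) b = Dz a b c * y := by
      simp [dz, crz, Dz]; ring
    have k3 : dz (fun i => x * crz b c i + y * crz c a i + z * crz a b i) c = Dz a b c * z := by
      simp [dz, crz, Dz]; ring
    simp only [k1, k2, k3, h, one_mul]

lemma chi_smul {s : ℝ} (hs : 0 < s) (x μ : ℝ) : chi (s * x) μ = chi x μ := by
  unfold chi pos01
  simp [hs]

lemma hasSum_cone (a b c : Fin 3 → ℤ) (h : Dz a b c = 1) (ξ : Fin 3 → ℝ)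
    (h1 : D3 (coeLat b) (coeLat c) ξ ≠ 0) (h2 : D3 (coeLat c) (coeLat a) ξ ≠ 0)
    (h3 : D3 (coeLat a) (coeLat b) ξ ≠ 0) (s : ℝ) (hs : 0 < s) :
    HasSum (fun m : Fin 3 → ℤ => chiProd ξ (coeLat m) (coeLat a) (coeLat b) (coeLat c) *
        Real.exp (-(s * dt (coeLat m) ξ)))
      (1 / (1 - Real.exp (-(s * D3 (coeLat b) (coeLat c) ξ))) *
       (1 / (1 - Real.exp (-(s * D3 (coeLat c) (coeLat a) ξ)))) *
       (1 / (1 - Real.exp (-(s * D3 (coeLat a) (coeLat b) ξ))))) := by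
  have hp := hasSum_prod3 _ _ _ _ _ _ (hasSum_chi _ (mul_ne_zero hs.ne' h1))
    (hasSum_chi _ (mul_ne_zero hs.ne' h2)) (hasSum_chi _ (mul_ne_zero hs.ne' h3))
  have := (Equiv.hasSum_iff (evalEquiv a b c h)).2 hp
  convert this using 2 with m
  simp only [Function.comp, evalEquiv, Equiv.coe_fn_mk, chi_smul hs, chiProd, dt_coe]
  have hcr := cramer_dt (coeLat a) (coeLat b) (coeLat c) ξ (coeLat m)
  rw [D3_coe, h] at hcr
  simp only [Int.cast_one, one_mul, dt_coe] at hcr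
  have e : Real.exp (-(s * dt (coeLat m) ξ)) =
      Real.exp (-(s * D3 (coeLat b) (coeLat c) ξ * (dz m a : ℝ))) *
      Real.exp (-(s * D3 (coeLat c) (coeLat a) ξ * (dz m b : ℝ))) *
      Real.exp (-(s * D3 (coeLat a) (coeLat b) ξ * (dz m c : ℝ))) := by
    rw [← Real.exp_add, ← Real.exp_add, hcr]
    congr 1; ring
  rw [e]; ring

lemma coeLat_ne_zero {m : Fin 3 → ℤ} (hm : m ≠ 0) : coeLat m ≠ 0 := by
  intro h
  apply hm
  funext i
  have := congrFun h i
  simpa [coeLat] using this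

/-- The Todd identity. -/
lemma Cyc.todd (h : Cyc M) (U : Set (Fin 3 → ℝ)) (hU : IsOpen U) (hUn : U.Nonempty)
    (hdeg : ∀ ξ ∈ U, Gen M ξ → Ncount M ξ 0 = 3) (ξ : Fin 3 → ℝ) (hξ : Gen M ξ)
    (s : ℝ) (hs : 0 < s) :
    ∑ t ∈ M, (1 / (1 - Real.exp (-(s * D3 (coeLat t.2.1) (coeLat t.2.2) ξ))) *
       (1 / (1 - Real.exp (-(s * D3 (coeLat t.2.2) (coeLat t.1) ξ)))) *
       (1 / (1 - Real.exp (-(s * D3 (coeLat t.1) (coeLat t.2.1) ξ))))) = 3 := by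
  have H : HasSum (fun m : Fin 3 → ℤ => ∑ t ∈ M,
      chiProd ξ (coeLat m) (coeLat t.1) (coeLat t.2.1) (coeLat t.2.2) *
        Real.exp (-(s * dt (coeLat m) ξ)))
      (∑ t ∈ M, (1 / (1 - Real.exp (-(s * D3 (coeLat t.2.1) (coeLat t.2.2) ξ))) *
       (1 / (1 - Real.exp (-(s * D3 (coeLat t.2.2) (coeLat t.1) ξ)))) *
       (1 / (1 - Real.exp (-(s * D3 (coeLat t.1) (coeLat t.2.1) ξ)))))) :=
    hasSum_sum (s := M) (fun t ht => by
      obtain ⟨a, b, c⟩ := t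
      have r1 := h.rot _ _ _ ht
      have r2 := h.rot _ _ _ r1
      refine hasSum_cone a b c ?_ ξ (hξ _ r1) (hξ _ r2) (hξ _ ht) s hs
      have := h.uni _ _ _ ht
      rw [D3_coe] at this
      exact_mod_cast this)
  have H2 : HasSum (fun m : Fin 3 → ℤ => ∑ t ∈ M,
      chiProd ξ (coeLat m) (coeLat t.1) (coeLat t.2.1) (coeLat t.2.2) *
        Real.exp (-(s * dt (coeLat m) ξ))) 3 := by
    have e : ∀ m : Fin 3 → ℤ, (∑ t ∈ M,
      chiProd ξ (coeLat m) (coeLat t.1) (coeLat t.2.1) (coeLat t.2.2) *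
        Real.exp (-(s * dt (coeLat m) ξ))) = Ncount M ξ (coeLat m) * Real.exp (-(s * dt (coeLat m) ξ)) := by
      intro m; rw [Ncount, Finset.sum_mul]
    simp only [e]
    have h0 : coeLat (0 : Fin 3 → ℤ) = 0 := by funext i; simp [coeLat]
    convert hasSum_single (0 : Fin 3 → ℤ) ?_ using 1
    · rw [h0, h.N_deg U hU hUn hdeg ξ hξ]
      simp [dt]
    · intro m hm
      rw [h.N_zero ξ _ hξ (coeLat_ne_zero hm), zero_mul]
  exact H.unique H2

/-! ### Asymptotics -/

lemma todd_rem : Tendsto (fun t : ℝ => (t / (1 - Real.exp (-t)) - (1 + t / 2 + t ^ 2 / 12)) / t ^ 3)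
    (nhdsWithin 0 {0}ᶜ) (nhds 0) := by
  have hδ : Tendsto (fun t : ℝ => (Real.exp (-t) -
      ∑ i ∈ Finset.range 5, (-t) ^ i / (i.factorial : ℝ)) / t ^ 4) (nhdsWithin 0 {0}ᶜ) (nhds 0) := by
    have h1 := (Real.exp_sub_sum_range_succ_isLittleO_pow 4).tendsto_div_nhds_zero
    have h2 : Tendsto (fun t : ℝ => -t) (nhdsWithin 0 {0}ᶜ) (nhds 0) := by
      have : Tendsto (fun t : ℝ => -t) (nhds 0) (nhds 0) := by
        simpa using (continuous_neg (G := ℝ)).tendsto 0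
      exact this.mono_left nhdsWithin_le_nhds
    have h3 := h1.comp h2
    refine h3.congr (fun t => ?_)
    simp only [Function.comp]
    congr 1
    ring
  have hq : Tendsto (fun t : ℝ => t / (1 - Real.exp (-t))) (nhdsWithin 0 {0}ᶜ) (nhds 1) := by
    have hd : HasDerivAt (fun t : ℝ => 1 - Real.exp (-t)) 1 0 := by
      have := ((hasDerivAt_neg (0 : ℝ)).exp).const_sub 1
      simpa using this
    have h1 := hd.tendsto_slope
    have h2 := h1.inv₀ one_ne_zero
    rw [inv_one] at h2
    refine h2.congr (fun t => ?_)
    simp [slope_def_field]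
  have hpoly : Tendsto (fun t : ℝ => 1 + t / 2 + t ^ 2 / 12) (nhdsWithin 0 {0}ᶜ) (nhds 1) := by
    have : Continuous (fun t : ℝ => 1 + t / 2 + t ^ 2 / 12) := by fun_prop
    have h := this.tendsto 0
    norm_num at h
    exact h.mono_left nhdsWithin_le_nhds
  have hpoly2 : Tendsto (fun t : ℝ => t / 144 + t ^ 2 / 288) (nhdsWithin 0 {0}ᶜ) (nhds 0) := by
    have : Continuous (fun t : ℝ => t / 144 + t ^ 2 / 288) := by fun_prop
    have h := this.tendsto 0
    norm_num at h
    exact (by simpa using h.mono_left nhdsWithin_le_nhds)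
  have hall := ((hδ.mul hpoly).add hpoly2).mul hq
  simp only [zero_mul, zero_add] at hall
  refine hall.congr' ?_
  filter_upwards [self_mem_nhdsWithin] with t ht
  have ht0 : t ≠ 0 := ht
  have h1 : 1 - Real.exp (-t) ≠ 0 := by
    intro h
    have : Real.exp (-t) = 1 := by linarith
    rw [Real.exp_eq_one_iff] at this
    exact ht0 (by linarith)
  simp only [Finset.sum_range_succ, Finset.sum_range_zero, Nat.factorial]
  field_simp
  push_cast
  ring

set_option maxRecDepth 4000 in
lemma todd_local (x y z : ℝ) (hx : x ≠ 0) (hy : y ≠ 0) (hz : z ≠ 0) :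
    ∃ (A B C : ℝ) (R : ℝ → ℝ), Tendsto R (nhdsWithin 0 (Set.Ioi 0)) (nhds 0) ∧
      ∀ s : ℝ, 0 < s → s ^ 3 * (1 / (1 - Real.exp (-(s * x))) * (1 / (1 - Real.exp (-(s * y)))) *
        (1 / (1 - Real.exp (-(s * z))))) =
        A + B * s + C * s ^ 2 +
          ((x + y + z) * (1 / x + 1 / y + 1 / z) / 24) * s ^ 3 + s ^ 3 * R s := by
  set r : ℝ → ℝ := fun t => (t / (1 - Real.exp (-t)) - (1 + t / 2 + t ^ 2 / 12)) / t ^ 3 with hr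
  have hr0 : ∀ w : ℝ, w ≠ 0 → Tendsto (fun s => r (s * w)) (nhdsWithin 0 (Set.Ioi 0)) (nhds 0) := by
    intro w hw
    apply todd_rem.comp
    apply tendsto_nhdsWithin_of_tendsto_nhds_of_eventually_within
    · have : Continuous (fun s : ℝ => s * w) := by fun_prop
      have h := this.tendsto 0
      rw [zero_mul] at h
      exact h.mono_left nhdsWithin_le_nhds
    · filter_upwards [self_mem_nhdsWithin] with s hs
      exact mul_ne_zero (ne_of_gt hs) hw
  have hid : ∀ w : ℝ, w ≠ 0 → ∀ s : ℝ, 0 < s → 1 / (1 - Real.exp (-(s * w))) =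
      (1 + (s * w) / 2 + (s * w) ^ 2 / 12 + (s * w) ^ 3 * r (s * w)) / (s * w) := by
    intro w hw s hs
    have h0 : s * w ≠ 0 := mul_ne_zero hs.ne' hw
    have h1 : 1 - Real.exp (-(s * w)) ≠ 0 := by
      intro h
      have : Real.exp (-(s * w)) = 1 := by linarith
      rw [Real.exp_eq_one_iff] at this
      exact h0 (by linarith)
    simp only [hr]
    field_simp
    ring
  have hs0 : Tendsto (fun s : ℝ => s) (nhdsWithin 0 (Set.Ioi 0)) (nhds 0) :=
    (continuous_id.tendsto 0).mono_left nhdsWithin_le_nhds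
  have p : ∀ w : ℝ, Tendsto (fun s : ℝ => 1 + (s * w) / 2 + (s * w) ^ 2 / 12)
      (nhdsWithin 0 (Set.Ioi 0)) (nhds 1) := by
    intro w
    have : Continuous (fun s : ℝ => 1 + (s * w) / 2 + (s * w) ^ 2 / 12) := by fun_prop
    have h := this.tendsto 0
    norm_num at h
    exact h.mono_left nhdsWithin_le_nhds
  have c3 : ∀ w : ℝ, w ≠ 0 → Tendsto (fun s : ℝ => (s * w) ^ 3 * r (s * w))
      (nhdsWithin 0 (Set.Ioi 0)) (nhds 0) := by
    intro w hw
    have : Continuous (fun s : ℝ => (s * w) ^ 3) := by fun_prop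
    have h := this.tendsto 0
    norm_num at h
    simpa using (h.mono_left nhdsWithin_le_nhds).mul (hr0 w hw)
  refine ⟨1 / (x * y * z), (x + y + z) / 2 / (x * y * z),
    ((x * y + y * z + z * x) / 4 + (x ^ 2 + y ^ 2 + z ^ 2) / 12) / (x * y * z),
    fun s => 1 / (x * y * z) * (
      s * ((x ^ 2 * y ^ 2 + y ^ 2 * z ^ 2 + z ^ 2 * x ^ 2) / 144 +
        (x ^ 2 * y * z + x * y ^ 2 * z + x * y * z ^ 2) / 48 +
        s * (x ^ 2 * y ^ 2 * z + y ^ 2 * z ^ 2 * x + z ^ 2 * x ^ 2 * y) / 288 +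
        s ^ 2 * (x ^ 2 * y ^ 2 * z ^ 2) / 1728) +
      x ^ 3 * r (s * x) * (1 + (s * y) / 2 + (s * y) ^ 2 / 12) * (1 + (s * z) / 2 + (s * z) ^ 2 / 12) +
      y ^ 3 * r (s * y) * (1 + (s * x) / 2 + (s * x) ^ 2 / 12 + (s * x) ^ 3 * r (s * x)) *
        (1 + (s * z) / 2 + (s * z) ^ 2 / 12) +
      z ^ 3 * r (s * z) * (1 + (s * x) / 2 + (s * x) ^ 2 / 12 + (s * x) ^ 3 * r (s * x)) *
        (1 + (s * y) / 2 + (s * y) ^ 2 / 12 + (s * y) ^ 3 * r (s * y))), ?_, ?_⟩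
  · have t0 : Tendsto (fun s : ℝ => s * ((x ^ 2 * y ^ 2 + y ^ 2 * z ^ 2 + z ^ 2 * x ^ 2) / 144 +
        (x ^ 2 * y * z + x * y ^ 2 * z + x * y * z ^ 2) / 48 +
        s * (x ^ 2 * y ^ 2 * z + y ^ 2 * z ^ 2 * x + z ^ 2 * x ^ 2 * y) / 288 +
        s ^ 2 * (x ^ 2 * y ^ 2 * z ^ 2) / 1728)) (nhdsWithin 0 (Set.Ioi 0)) (nhds 0) := by
      refine Tendsto.mono_left ?_ nhdsWithin_le_nhds
      apply Continuous.tendsto'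
      · fun_prop
      · simp
    have t1 := (((hr0 x hx).const_mul (x ^ 3)).mul (p y)).mul (p z)
    have t2 := (((hr0 y hy).const_mul (y ^ 3)).mul ((p x).add (c3 x hx))).mul (p z)
    have t3 := (((hr0 z hz).const_mul (z ^ 3)).mul ((p x).add (c3 x hx))).mul ((p y).add (c3 y hy))
    have := (((t0.add t1).add t2).add t3).const_mul (1 / (x * y * z))
    simp only [mul_zero, add_zero, mul_one] at this
    exact this
  · intro s hs
    rw [hid x hx s hs, hid y hy s hs, hid z hz s hs]
    beta_reduce
    clear hid hr0 p c3 hs0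
    clear_value r
    generalize r (s * x) = r1
    generalize r (s * y) = r2
    generalize r (s * z) = r3
    have := hs.ne'
    field_simp
    ring

lemma poly_rem_zero (A B C E : ℝ) (R : ℝ → ℝ) (hR : Tendsto R (nhdsWithin 0 (Set.Ioi 0)) (nhds 0))
    (h : ∀ s : ℝ, 0 < s → A + B * s + C * s ^ 2 + E * s ^ 3 + s ^ 3 * R s = 0) : E = 0 := by
  have hs : ∀ n : ℕ, n ≠ 0 → Tendsto (fun s : ℝ => s ^ n) (nhdsWithin 0 (Set.Ioi 0)) (nhds 0) := by
    intro n hn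
    refine Tendsto.mono_left ?_ nhdsWithin_le_nhds
    exact (continuous_pow n).tendsto' 0 0 (by simp [hn])
  have h1 : Tendsto (fun s : ℝ => s) (nhdsWithin 0 (Set.Ioi 0)) (nhds 0) := by
    simpa using hs 1 one_ne_zero
  have z : ∀ (f : ℝ → ℝ) (a : ℝ), Tendsto f (nhdsWithin 0 (Set.Ioi 0)) (nhds a) →
      (∀ s, 0 < s → f s = 0) → a = 0 := by
    intro f a hf h0
    refine tendsto_nhds_unique hf (Tendsto.congr' ?_ tendsto_const_nhds)
    filter_upwards [self_mem_nhdsWithin] with s hs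
    exact (h0 s hs).symm
  have hA : A = 0 := by
    refine z (fun s => A + B * s + C * s ^ 2 + E * s ^ 3 + s ^ 3 * R s) A ?_ h
    have := ((((tendsto_const_nhds (x := A)).add (h1.const_mul B)).add
      ((hs 2 two_ne_zero).const_mul C)).add
      ((hs 3 three_ne_zero).const_mul E)).add ((hs 3 three_ne_zero).mul hR)
    simpa using this
  have hB : B = 0 := by
    refine z (fun s => B + C * s + E * s ^ 2 + s ^ 2 * R s) B ?_ ?_
    · have := ((((tendsto_const_nhds (x := B)).add (h1.const_mul C)).add
        ((hs 2 two_ne_zero).const_mul E))).add ((hs 2 two_ne_zero).mul hR)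
      simpa using this
    · intro s h0
      have := h s h0
      rw [hA] at this
      have e : s * (B + C * s + E * s ^ 2 + s ^ 2 * R s) = 0 := by rw [← this]; ring
      exact (mul_eq_zero.1 e).resolve_left h0.ne'
  have hC : C = 0 := by
    refine z (fun s => C + E * s + s * R s) C ?_ ?_
    · have := (((tendsto_const_nhds (x := C)).add (h1.const_mul E))).add (h1.mul hR)
      simpa using this
    · intro s h0
      have := h s h0
      rw [hA, hB] at this
      have e : s ^ 2 * (C + E * s + s * R s) = 0 := by rw [← this]; ring
      exact (mul_eq_zero.1 e).resolve_left (pow_ne_zero 2 h0.ne')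
  refine z (fun s => E + R s) E ?_ ?_
  · simpa using (tendsto_const_nhds (x := E)).add hR
  · intro s h0
    have := h s h0
    rw [hA, hB, hC] at this
    have e : s ^ 3 * (E + R s) = 0 := by rw [← this]; ring
    exact (mul_eq_zero.1 e).resolve_left (pow_ne_zero 3 h0.ne')

/-- The localized form of the theorem. -/
lemma Cyc.core (h : Cyc M) (U : Set (Fin 3 → ℝ)) (hU : IsOpen U) (hUn : U.Nonempty)
    (hdeg : ∀ ξ ∈ U, Gen M ξ → Ncount M ξ 0 = 3) (ξ : Fin 3 → ℝ) (hξ : Gen M ξ) :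
    ∑ t ∈ M, (D3 (coeLat t.2.1) (coeLat t.2.2) ξ + D3 (coeLat t.2.2) (coeLat t.1) ξ +
        D3 (coeLat t.1) (coeLat t.2.1) ξ) *
      (1 / D3 (coeLat t.2.1) (coeLat t.2.2) ξ + 1 / D3 (coeLat t.2.2) (coeLat t.1) ξ +
        1 / D3 (coeLat t.1) (coeLat t.2.1) ξ) = 72 := by
  have hloc : ∀ t : (Fin 3 → ℤ) × (Fin 3 → ℤ) × (Fin 3 → ℤ), ∃ (A B C : ℝ) (R : ℝ → ℝ), t ∈ M →
      (Tendsto R (nhdsWithin 0 (Set.Ioi 0)) (nhds 0) ∧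
      ∀ s : ℝ, 0 < s → s ^ 3 * (1 / (1 - Real.exp (-(s * D3 (coeLat t.2.1) (coeLat t.2.2) ξ))) *
       (1 / (1 - Real.exp (-(s * D3 (coeLat t.2.2) (coeLat t.1) ξ)))) *
       (1 / (1 - Real.exp (-(s * D3 (coeLat t.1) (coeLat t.2.1) ξ))))) =
        A + B * s + C * s ^ 2 +
          ((D3 (coeLat t.2.1) (coeLat t.2.2) ξ + D3 (coeLat t.2.2) (coeLat t.1) ξ +
        D3 (coeLat t.1) (coeLat t.2.1) ξ) *
      (1 / D3 (coeLat t.2.1) (coeLat t.2.2) ξ + 1 / D3 (coeLat t.2.2) (coeLat t.1) ξ +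
        1 / D3 (coeLat t.1) (coeLat t.2.1) ξ) / 24) * s ^ 3 + s ^ 3 * R s) := by
    rintro ⟨a, b, c⟩
    by_cases ht : (a, b, c) ∈ M
    · have r1 := h.rot _ _ _ ht
      have r2 := h.rot _ _ _ r1
      obtain ⟨A, B, C, R, h1, h2⟩ := todd_local _ _ _ (hξ _ r1) (hξ _ r2) (hξ _ ht)
      exact ⟨A, B, C, R, fun _ => ⟨h1, h2⟩⟩
    · exact ⟨0, 0, 0, 0, fun h => absurd h ht⟩
  choose A B C R hR using hloc
  have hfin := poly_rem_zero (∑ t ∈ M, A t) (∑ t ∈ M, B t) (∑ t ∈ M, C t)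
    (∑ t ∈ M, ((D3 (coeLat t.2.1) (coeLat t.2.2) ξ + D3 (coeLat t.2.2) (coeLat t.1) ξ +
        D3 (coeLat t.1) (coeLat t.2.1) ξ) *
      (1 / D3 (coeLat t.2.1) (coeLat t.2.2) ξ + 1 / D3 (coeLat t.2.2) (coeLat t.1) ξ +
        1 / D3 (coeLat t.1) (coeLat t.2.1) ξ) / 24) - 3) (fun s => ∑ t ∈ M, R t s) ?_ ?_
  · rw [← Finset.sum_div] at hfin
    linarith
  · have := tendsto_finsetSum M (fun t ht => (hR t ht).1)
    simpa using this
  · intro s hs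
    have h1 := h.todd U hU hUn hdeg ξ hξ s hs
    have h2 : s ^ 3 * 3 = ∑ t ∈ M, (A t + B t * s + C t * s ^ 2 +
          ((D3 (coeLat t.2.1) (coeLat t.2.2) ξ + D3 (coeLat t.2.2) (coeLat t.1) ξ +
        D3 (coeLat t.1) (coeLat t.2.1) ξ) *
      (1 / D3 (coeLat t.2.1) (coeLat t.2.2) ξ + 1 / D3 (coeLat t.2.2) (coeLat t.1) ξ +
        1 / D3 (coeLat t.1) (coeLat t.2.1) ξ) / 24) * s ^ 3 + s ^ 3 * R t s) := by
      rw [← h1, Finset.mul_sum]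
      exact Finset.sum_congr rfl (fun t ht => (hR t ht).2 s hs)
    simp only [Finset.sum_add_distrib, ← Finset.sum_mul, ← Finset.mul_sum] at h2
    linarith

/-! ### Regular triangulations -/

/-- The lattice point data coming from a reflexive polytope. -/
structure Setup (V : Finset (Fin 3 → ℤ)) : Prop where
  span : ∀ n : Fin 3 → ℝ, n ≠ 0 → ∃ v ∈ V, dt n (coeLat v) < 0
  integ : ∀ u : Fin 3 → ℝ, (∀ v ∈ V, -1 ≤ dt u (coeLat v)) → ∀ a ∈ V, ∀ b ∈ V, ∀ c ∈ V,
    D3 (coeLat a) (coeLat b) (coeLat c) ≠ 0 → dt u (coeLat a) = -1 → dt u (coeLat b) = -1 →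
    dt u (coeLat c) = -1 → ∃ m : Fin 3 → ℤ, u = coeLat m
  sat : ∀ p : Fin 3 → ℤ, p ≠ 0 → ∀ a ∈ V, ∀ b ∈ V, ∀ c ∈ V, ∀ α β γ : ℝ, 0 ≤ α → 0 ≤ β → 0 ≤ γ →
    α + β + γ = 1 → coeLat p = α • coeLat a + β • coeLat b + γ • coeLat c → p ∈ V

/-- The lifted determinant. -/
def Ldet (a b c d : Fin 3 → ℤ) : ((Fin 3 → ℤ) → ℝ) →ₗ[ℝ] ℝ where
  toFun lam := D3 (coeLat a) (coeLat b) (coeLat c) * lam d -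
    D3 (coeLat b) (coeLat c) (coeLat d) * lam a - D3 (coeLat c) (coeLat a) (coeLat d) * lam b -
    D3 (coeLat a) (coeLat b) (coeLat d) * lam c
  map_add' x y := by simp only [Pi.add_apply]; ring
  map_smul' r x := by simp only [Pi.smul_apply, smul_eq_mul, RingHom.id_apply]; ring

lemma Ldet_apply (a b c d : Fin 3 → ℤ) (lam : (Fin 3 → ℤ) → ℝ) :
    Ldet a b c d lam = D3 (coeLat a) (coeLat b) (coeLat c) * lam d -
    D3 (coeLat b) (coeLat c) (coeLat d) * lam a - D3 (coeLat c) (coeLat a) (coeLat d) * lam b -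
    D3 (coeLat a) (coeLat b) (coeLat d) * lam c := rfl

lemma Ldet_cont (a b c d : Fin 3 → ℤ) : Continuous (Ldet a b c d) := by
  change Continuous (fun lam => Ldet a b c d lam)
  simp only [Ldet_apply]
  fun_prop

/-- the square of the Euclidean norm -/
def qn (v : Fin 3 → ℤ) : ℝ := dt (coeLat v) (coeLat v)

/-- the badness condition for quadruples -/
def Bad (t : (Fin 3 → ℤ) × (Fin 3 → ℤ) × (Fin 3 → ℤ) × (Fin 3 → ℤ)) : Prop :=
  Ldet t.1 t.2.1 t.2.2.1 t.2.2.2 1 < 0 ∨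
    (Ldet t.1 t.2.1 t.2.2.1 t.2.2.2 1 = 0 ∧ Ldet t.1 t.2.1 t.2.2.1 t.2.2.2 qn < 0)

/-- Good heights. -/
structure Good (V : Finset (Fin 3 → ℤ)) (lam : (Fin 3 → ℤ) → ℝ) : Prop where
  pos : ∀ v ∈ V, 0 < lam v
  bad : ∀ a ∈ V, ∀ b ∈ V, ∀ c ∈ V, ∀ d ∈ V, Bad (a, b, c, d) → Ldet a b c d lam < 0
  gen : ∀ a ∈ V, ∀ b ∈ V, ∀ c ∈ V, ∀ d ∈ V, D3 (coeLat a) (coeLat b) (coeLat c) ≠ 0 →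
    d ≠ a → d ≠ b → d ≠ c → Ldet a b c d lam ≠ 0

lemma exists_good (V : Finset (Fin 3 → ℤ)) : ∃ lam, Good V lam := by
  classical
  let Q := (V ×ˢ V ×ˢ V ×ˢ V).filter Bad
  let G := (V ×ˢ V ×ˢ V ×ˢ V).filter (fun t =>
    D3 (coeLat t.1) (coeLat t.2.1) (coeLat t.2.2.1) ≠ 0 ∧ t.2.2.2 ≠ t.1 ∧ t.2.2.2 ≠ t.2.1 ∧
      t.2.2.2 ≠ t.2.2.1)
  let U : Set ((Fin 3 → ℤ) → ℝ) := (⋂ v ∈ V, {l | 0 < l v}) ∩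
    (⋂ t ∈ Q, {l | Ldet t.1 t.2.1 t.2.2.1 t.2.2.2 l < 0})
  have hU : IsOpen U := by
    refine IsOpen.inter ?_ ?_
    · exact isOpen_biInter_finset (fun v _ => isOpen_lt continuous_const (continuous_apply v))
    · exact isOpen_biInter_finset (fun t _ => isOpen_lt (Ldet_cont _ _ _ _) continuous_const)
  have hUn : U.Nonempty := by
    have hev : ∀ᶠ ε : ℝ in nhdsWithin 0 (Set.Ioi 0), ((1 : (Fin 3 → ℤ) → ℝ) + ε • qn) ∈ U := by
      have h1 : ∀ᶠ ε : ℝ in nhdsWithin 0 (Set.Ioi 0), ∀ v ∈ V, 0 < ((1 : (Fin 3 → ℤ) → ℝ) + ε • qn) v := by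
        filter_upwards [self_mem_nhdsWithin] with ε hε v _
        have hε' : 0 < ε := hε
        have : 0 ≤ qn v := by
          unfold qn dt; nlinarith [mul_self_nonneg (coeLat v 0), mul_self_nonneg (coeLat v 1),
            mul_self_nonneg (coeLat v 2)]
        simp only [Pi.add_apply, Pi.one_apply, Pi.smul_apply, smul_eq_mul]
        positivity
      have h2 : ∀ᶠ ε : ℝ in nhdsWithin 0 (Set.Ioi 0), ∀ t ∈ Q,
          Ldet t.1 t.2.1 t.2.2.1 t.2.2.2 ((1 : (Fin 3 → ℤ) → ℝ) + ε • qn) < 0 := by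
        rw [Filter.eventually_all_finset]
        intro t ht
        have hb : Bad t := (Finset.mem_filter.1 ht).2
        simp only [map_add, map_smul, smul_eq_mul]
        rcases hb with hb | ⟨hb, hb'⟩
        · have hc : Continuous (fun ε : ℝ => Ldet t.1 t.2.1 t.2.2.1 t.2.2.2 1 +
            ε * Ldet t.1 t.2.1 t.2.2.1 t.2.2.2 qn) := by fun_prop
          have := hc.continuousAt.eventually_lt (x₀ := 0) (continuousAt_const (y := (0 : ℝ)))
            (by simpa using hb)
          exact this.filter_mono nhdsWithin_le_nhds
        · filter_upwards [self_mem_nhdsWithin] with ε hε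
          rw [hb, zero_add]
          exact mul_neg_of_pos_of_neg hε hb'
      filter_upwards [h1, h2] with ε e1 e2
      refine ⟨?_, ?_⟩
      · simp only [Set.mem_iInter]; exact e1
      · simp only [Set.mem_iInter]; exact e2
    obtain ⟨ε, hε⟩ := hev.exists
    exact ⟨_, hε⟩
  obtain ⟨lam, hl, hg⟩ := exists_generic G (fun t => Ldet t.1 t.2.1 t.2.2.1 t.2.2.2)
    (fun t => Ldet_cont _ _ _ _) (fun _ => 0) (by
      rintro ⟨a, b, c, d⟩ ht h0
      obtain ⟨-, hD, ha, hb, hc⟩ := Finset.mem_filter.1 ht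
      have := LinearMap.congr_fun h0 (Pi.single d 1)
      simp only [Ldet_apply, LinearMap.zero_apply] at this
      simp only at ha hb hc
      rw [Pi.single_eq_same, Pi.single_eq_of_ne ha.symm, Pi.single_eq_of_ne hb.symm,
        Pi.single_eq_of_ne hc.symm] at this
      apply hD
      simpa using this) U hU hUn
  obtain ⟨hl1, hl2⟩ := hl
  simp only [Set.mem_iInter] at hl1 hl2
  refine ⟨lam, hl1, ?_, ?_⟩
  · intro a ha b hb c hc d hd hbad
    exact hl2 (a, b, c, d) (by simp [Q, ha, hb, hc, hd, hbad])
  · intro a ha b hb c hc d hd hD h1 h2 h3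
    exact hg (a, b, c, d) (by simp [G, ha, hb, hc, hd, hD, h1, h2, h3])

lemma exists_fun (a b c : Fin 3 → ℝ) (h : D3 a b c ≠ 0) (x y z : ℝ) :
    ∃ u, dt u a = x ∧ dt u b = y ∧ dt u c = z := by
  refine ⟨(1 / D3 a b c) • (x • cr b c + y • cr c a + z • cr a b), ?_, ?_, ?_⟩
  · have : dt (x • cr b c + y • cr c a + z • cr a b) a = D3 a b c * x := by
      simp [dt, cr, D3]; ring
    have e : ∀ (k : ℝ) (p q : Fin 3 → ℝ), dt (k • p) q = k * dt p q := by
      intro k p q; simp [dt]; ring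
    rw [e, this]; field_simp
  · have : dt (x • cr b c + y • cr c a + z • cr a b) b = D3 a b c * y := by
      simp [dt, cr, D3]; ring
    have e : ∀ (k : ℝ) (p q : Fin 3 → ℝ), dt (k • p) q = k * dt p q := by
      intro k p q; simp [dt]; ring
    rw [e, this]; field_simp
  · have : dt (x • cr b c + y • cr c a + z • cr a b) c = D3 a b c * z := by
      simp [dt, cr, D3]; ring
    have e : ∀ (k : ℝ) (p q : Fin 3 → ℝ), dt (k • p) q = k * dt p q := by
      intro k p q; simp [dt]; ring
    rw [e, this]; field_simp

/-- Feasibility of a functional. -/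
def Feas (V : Finset (Fin 3 → ℤ)) (lam : (Fin 3 → ℤ) → ℝ) (u : Fin 3 → ℝ) : Prop :=
  ∀ v ∈ V, - lam v ≤ dt u (coeLat v)

open Classical in
/-- The oriented triangles of the regular triangulation. -/
def Tri (V : Finset (Fin 3 → ℤ)) (lam : (Fin 3 → ℤ) → ℝ) :
    Finset ((Fin 3 → ℤ) × (Fin 3 → ℤ) × (Fin 3 → ℤ)) :=
  (V ×ˢ V ×ˢ V).filter (fun t => 0 < D3 (coeLat t.1) (coeLat t.2.1) (coeLat t.2.2) ∧
    ∃ u, Feas V lam u ∧ dt u (coeLat t.1) = - lam t.1 ∧ dt u (coeLat t.2.1) = - lam t.2.1 ∧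
      dt u (coeLat t.2.2) = - lam t.2.2)

variable {V : Finset (Fin 3 → ℤ)} {lam : (Fin 3 → ℤ) → ℝ}

lemma mem_Tri {a b c : Fin 3 → ℤ} : (a, b, c) ∈ Tri V lam ↔ a ∈ V ∧ b ∈ V ∧ c ∈ V ∧
    0 < D3 (coeLat a) (coeLat b) (coeLat c) ∧
    ∃ u, Feas V lam u ∧ dt u (coeLat a) = - lam a ∧ dt u (coeLat b) = - lam b ∧
      dt u (coeLat c) = - lam c := by
  simp [Tri, and_assoc]

lemma Ldet_rel {a b c d : Fin 3 → ℤ} {u : Fin 3 → ℝ} (ha : dt u (coeLat a) = - lam a)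
    (hb : dt u (coeLat b) = - lam b) (hc : dt u (coeLat c) = - lam c) :
    Ldet a b c d lam = D3 (coeLat a) (coeLat b) (coeLat c) * (dt u (coeLat d) + lam d) := by
  rw [Ldet_apply, mul_add, cramer_dt, ha, hb, hc]; ring

/-- a triangle tight at a fourth point -/
lemma tight_mem (hg : Good V lam) {a b c d : Fin 3 → ℤ} {u : Fin 3 → ℝ} (ha : a ∈ V) (hb : b ∈ V)
    (hc : c ∈ V) (hd : d ∈ V) (hD : 0 < D3 (coeLat a) (coeLat b) (coeLat c))
    (ua : dt u (coeLat a) = - lam a)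
    (ub : dt u (coeLat b) = - lam b) (uc : dt u (coeLat c) = - lam c)
    (ud : dt u (coeLat d) = - lam d) : d = a ∨ d = b ∨ d = c := by
  by_contra hcon
  push Not at hcon
  refine hg.gen a ha b hb c hc d hd hD.ne' hcon.1 hcon.2.1 hcon.2.2 ?_
  rw [Ldet_rel ua ub uc, ud]; ring

/-- the integral supporting functional of a triangle -/
lemma Tri_fun (hs : Setup V) (hg : Good V lam) {a b c : Fin 3 → ℤ} (h : (a, b, c) ∈ Tri V lam) :
    ∃ m : Fin 3 → ℤ, dz m a = -1 ∧ dz m b = -1 ∧ dz m c = -1 ∧ ∀ v ∈ V, -1 ≤ dz m v := by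
  obtain ⟨ha, hb, hc, hD, u, hf, ua, ub, uc⟩ := mem_Tri.1 h
  obtain ⟨w, wa, wb, wc⟩ := exists_fun _ _ _ hD.ne' (-1) (-1) (-1)
  have hw : ∀ v ∈ V, -1 ≤ dt w (coeLat v) := by
    intro v hv
    by_contra hcon
    push Not at hcon
    have h1 : Ldet a b c v 1 < 0 := by
      rw [Ldet_rel (u := w) (by simpa using wa) (by simpa using wb) (by simpa using wc)]
      refine mul_neg_of_pos_of_neg hD ?_
      simp only [Pi.one_apply]; linarith
    have h2 := hg.bad a ha b hb c hc v hv (Or.inl h1)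
    rw [Ldet_rel ua ub uc] at h2
    have h3 := hf v hv
    have : 0 ≤ D3 (coeLat a) (coeLat b) (coeLat c) * (dt u (coeLat v) + lam v) :=
      mul_nonneg hD.le (by linarith)
    linarith
  obtain ⟨m, rfl⟩ := hs.integ w hw a ha b hb c hc hD.ne' wa wb wc
  simp only [dt_coe] at wa wb wc hw
  refine ⟨m, ?_, ?_, ?_, ?_⟩
  · exact_mod_cast wa
  · exact_mod_cast wb
  · exact_mod_cast wc
  · intro v hv; exact_mod_cast hw v hv

lemma qn_sub_pos {a b : Fin 3 → ℤ} (h : a ≠ b) : 0 < dt (coeLat a - coeLat b) (coeLat a - coeLat b) := by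
  have : ∃ i, a i ≠ b i := by
    by_contra hcon; push Not at hcon; exact h (funext hcon)
  obtain ⟨i, hi⟩ := this
  have hi' : coeLat a i - coeLat b i ≠ 0 := by
    unfold coeLat; rw [sub_ne_zero]; exact_mod_cast hi
  simp only [dt, Pi.sub_apply]
  have h0 := mul_self_nonneg (coeLat a 0 - coeLat b 0)
  have h1 := mul_self_nonneg (coeLat a 1 - coeLat b 1)
  have h2 := mul_self_nonneg (coeLat a 2 - coeLat b 2)
  have hp := mul_self_pos.2 hi'
  have h3 : i = 0 ∨ i = 1 ∨ i = 2 := by fin_cases i <;> simp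
  rcases h3 with rfl | rfl | rfl <;> linarith

lemma D3_self1 (a b : Fin 3 → ℝ) : D3 a a b = 0 := by unfold D3; ring
lemma D3_self2 (a b : Fin 3 → ℝ) : D3 a b a = 0 := by unfold D3; ring
lemma D3_self3 (a b : Fin 3 → ℝ) : D3 a b b = 0 := by unfold D3; ring

/-- no further lattice points in a triangle -/
lemma Tri_empty (hg : Good V lam) {a b c p : Fin 3 → ℤ} (h : (a, b, c) ∈ Tri V lam) (hp : p ∈ V)
    (α β γ : ℝ) (hα : 0 ≤ α) (hβ : 0 ≤ β) (hγ : 0 ≤ γ) (hsum : α + β + γ = 1)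
    (hcomb : coeLat p = α • coeLat a + β • coeLat b + γ • coeLat c) :
    p = a ∨ p = b ∨ p = c := by
  obtain ⟨ha, hb, hc, hD, u, hf, ua, ub, uc⟩ := mem_Tri.1 h
  by_contra hcon
  push Not at hcon
  have hab : a ≠ b := by rintro rfl; rw [D3_self1] at hD; exact lt_irrefl _ hD
  have hac : a ≠ c := by rintro rfl; rw [D3_self2] at hD; exact lt_irrefl _ hD
  have hbc : b ≠ c := by rintro rfl; rw [D3_self3] at hD; exact lt_irrefl _ hD
  have e1 : D3 (coeLat b) (coeLat c) (coeLat p) = α * D3 (coeLat a) (coeLat b) (coeLat c) := by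
    rw [hcomb]; simp only [D3, Pi.add_apply, Pi.smul_apply, smul_eq_mul]; ring
  have e2 : D3 (coeLat c) (coeLat a) (coeLat p) = β * D3 (coeLat a) (coeLat b) (coeLat c) := by
    rw [hcomb]; simp only [D3, Pi.add_apply, Pi.smul_apply, smul_eq_mul]; ring
  have e3 : D3 (coeLat a) (coeLat b) (coeLat p) = γ * D3 (coeLat a) (coeLat b) (coeLat c) := by
    rw [hcomb]; simp only [D3, Pi.add_apply, Pi.smul_apply, smul_eq_mul]; ring
  have hγ' : γ = 1 - α - β := by linarith
  have hL1 : Ldet a b c p 1 = 0 := by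
    rw [Ldet_apply, e1, e2, e3, hγ']; simp only [Pi.one_apply]; ring
  have hq : qn p = α * qn a + β * qn b + γ * qn c -
      (α * β * dt (coeLat a - coeLat b) (coeLat a - coeLat b) +
       β * γ * dt (coeLat b - coeLat c) (coeLat b - coeLat c) +
       α * γ * dt (coeLat a - coeLat c) (coeLat a - coeLat c)) := by
    unfold qn; rw [hcomb, hγ']
    simp only [dt, Pi.add_apply, Pi.sub_apply, Pi.smul_apply, smul_eq_mul]; ring
  have inj : ∀ x y : Fin 3 → ℤ, coeLat x = coeLat y → x = y := by
    intro x y hxy; funext i; have := congrFun hxy i; unfold coeLat at this; exact_mod_cast this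
  have hpos : 0 < α * β * dt (coeLat a - coeLat b) (coeLat a - coeLat b) +
       β * γ * dt (coeLat b - coeLat c) (coeLat b - coeLat c) +
       α * γ * dt (coeLat a - coeLat c) (coeLat a - coeLat c) := by
    have p1 := qn_sub_pos hab
    have p2 := qn_sub_pos hbc
    have p3 := qn_sub_pos hac
    rcases hα.eq_or_lt with h0 | h0
    · rcases hβ.eq_or_lt with h1 | h1
      · exfalso; apply hcon.2.2; apply inj
        rw [hcomb, ← h0, ← h1, show γ = 1 by linarith]; simp
      · rcases hγ.eq_or_lt with h2 | h2
        · exfalso; apply hcon.2.1; apply inj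
          rw [hcomb, ← h0, ← h2, show β = 1 by linarith]; simp
        · positivity
    · rcases hβ.eq_or_lt with h1 | h1
      · rcases hγ.eq_or_lt with h2 | h2
        · exfalso; apply hcon.1; apply inj
          rw [hcomb, ← h1, ← h2, show α = 1 by linarith]; simp
        · positivity
      · positivity
  have hLq : Ldet a b c p qn < 0 := by
    rw [Ldet_apply, e1, e2, e3, hq]
    have := mul_pos hD hpos
    nlinarith
  have h2 := hg.bad a ha b hb c hc p hp (Or.inr ⟨hL1, hLq⟩)
  rw [Ldet_rel ua ub uc] at h2
  have h3 := hf p hp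
  have : 0 ≤ D3 (coeLat a) (coeLat b) (coeLat c) * (dt u (coeLat p) + lam p) :=
    mul_nonneg hD.le (by linarith)
  linarith

lemma coeLat_inj {x y : Fin 3 → ℤ} (hxy : coeLat x = coeLat y) : x = y := by
  funext i; have := congrFun hxy i; unfold coeLat at this; exact_mod_cast this

lemma dz_zero (m : Fin 3 → ℤ) : dz m 0 = 0 := by simp [dz]

lemma Tri_uni_aux (hs : Setup V) (hg : Good V lam) {a b c p : Fin 3 → ℤ}
    (h : (a, b, c) ∈ Tri V lam) (r1 r2 r3 : ℤ) (h1 : 0 ≤ r1) (h2 : 0 ≤ r2) (h3 : 0 ≤ r3)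
    (l1 : r1 < Dz a b c) (l2 : r2 < Dz a b c) (l3 : r3 < Dz a b c)
    (hsum : r1 + r2 + r3 = Dz a b c)
    (hp : ∀ i, Dz a b c * p i = r1 * a i + r2 * b i + r3 * c i) : False := by
  obtain ⟨ha, hb, hc, hD, u, hf, ua, ub, uc⟩ := mem_Tri.1 h
  obtain ⟨m, ma, mb, mc, -⟩ := Tri_fun hs hg h
  have hD' : 0 < Dz a b c := by rw [D3_coe] at hD; exact_mod_cast hD
  have hmp : Dz a b c * dz m p = Dz a b c * (-1) := by
    have : Dz a b c * dz m p = r1 * dz m a + r2 * dz m b + r3 * dz m c := by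
      unfold dz
      linear_combination m 0 * hp 0 + m 1 * hp 1 + m 2 * hp 2
    rw [this, ma, mb, mc]; linarith
  have hmp' : dz m p = -1 := mul_left_cancel₀ hD'.ne' hmp
  have hp0 : p ≠ 0 := by
    rintro rfl; rw [dz_zero] at hmp'; norm_num at hmp'
  have hDR : (0 : ℝ) < (Dz a b c : ℝ) := by exact_mod_cast hD'
  have hcomb : coeLat p = ((r1 : ℝ) / Dz a b c) • coeLat a + ((r2 : ℝ) / Dz a b c) • coeLat b +
      ((r3 : ℝ) / Dz a b c) • coeLat c := by
    funext i
    have := hp i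
    have e : (Dz a b c : ℝ) * p i = r1 * a i + r2 * b i + r3 * c i := by exact_mod_cast this
    simp only [coeLat, Pi.add_apply, Pi.smul_apply, smul_eq_mul]
    field_simp
    linarith
  have hsumR : (r1 : ℝ) / Dz a b c + (r2 : ℝ) / Dz a b c + (r3 : ℝ) / Dz a b c = 1 := by
    rw [← add_div, ← add_div, div_eq_one_iff_eq hDR.ne']; exact_mod_cast hsum
  have k1 : (0 : ℝ) ≤ (r1 : ℝ) / Dz a b c := div_nonneg (by exact_mod_cast h1) hDR.le
  have k2 : (0 : ℝ) ≤ (r2 : ℝ) / Dz a b c := div_nonneg (by exact_mod_cast h2) hDR.le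
  have k3 : (0 : ℝ) ≤ (r3 : ℝ) / Dz a b c := div_nonneg (by exact_mod_cast h3) hDR.le
  have hpV := hs.sat p hp0 a ha b hb c hc _ _ _ k1 k2 k3 hsumR hcomb
  have e1 : Dz a b c * Dz b c p = Dz a b c * r1 := by
    simp only [Dz] at hp ⊢
    linear_combination (b 1 * c 2 - b 2 * c 1) * hp 0 + (b 2 * c 0 - b 0 * c 2) * hp 1 +
      (b 0 * c 1 - b 1 * c 0) * hp 2
  have e2 : Dz a b c * Dz c a p = Dz a b c * r2 := by
    simp only [Dz] at hp ⊢
    linear_combination (c 1 * a 2 - c 2 * a 1) * hp 0 + (c 2 * a 0 - c 0 * a 2) * hp 1 +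
      (c 0 * a 1 - c 1 * a 0) * hp 2
  have e3 : Dz a b c * Dz a b p = Dz a b c * r3 := by
    simp only [Dz] at hp ⊢
    linear_combination (a 1 * b 2 - a 2 * b 1) * hp 0 + (a 2 * b 0 - a 0 * b 2) * hp 1 +
      (a 0 * b 1 - a 1 * b 0) * hp 2
  replace e1 := mul_left_cancel₀ hD'.ne' e1
  replace e2 := mul_left_cancel₀ hD'.ne' e2
  replace e3 := mul_left_cancel₀ hD'.ne' e3
  rcases Tri_empty hg h hpV _ _ _ k1 k2 k3 hsumR hcomb with rfl | rfl | rfl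
  · have : Dz b c p = Dz p b c := by unfold Dz; ring
    omega
  · have : Dz c a p = Dz a p c := by unfold Dz; ring
    omega
  · omega

lemma Tri_uni (hs : Setup V) (hg : Good V lam) {a b c : Fin 3 → ℤ}
    (h : (a, b, c) ∈ Tri V lam) : Dz a b c = 1 := by
  obtain ⟨ha, hb, hc, hD, u, hf, ua, ub, uc⟩ := mem_Tri.1 h
  obtain ⟨m, ma, mb, mc, -⟩ := Tri_fun hs hg h
  have hD' : 0 < Dz a b c := by rw [D3_coe] at hD; exact_mod_cast hD
  by_cases hdiv : ∀ x : Fin 3 → ℤ, Dz a b c ∣ Dz b c x ∧ Dz a b c ∣ Dz c a x ∧ Dz a b c ∣ Dz a b x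
  · have hz : ∀ a b x : Fin 3 → ℤ, Dz a b x = dz (crz a b) x := by
      intro a b x; simp [Dz, dz, crz]; ring
    have hx : ∀ (w : Fin 3 → ℤ) (i : Fin 3), dz w (Pi.single i 1) = w i := by
      intro w i; fin_cases i <;> simp [dz]
    have A : ∀ i, ∃ k, crz b c i = Dz a b c * k := fun i => by
      have := (hdiv (Pi.single i 1)).1; rw [hz b c, hx] at this; exact this
    have B : ∀ i, ∃ k, crz c a i = Dz a b c * k := fun i => by
      have := (hdiv (Pi.single i 1)).2.1; rw [hz c a, hx] at this; exact this
    have C : ∀ i, ∃ k, crz a b i = Dz a b c * k := fun i => by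
      have := (hdiv (Pi.single i 1)).2.2; rw [hz a b (Pi.single i 1), hx] at this; exact this
    choose x hx using A
    choose y hy using B
    choose z hz using C
    have k1 : Dz (crz b c) (crz c a) (crz a b) = Dz a b c ^ 2 := by
      simp [Dz, crz]; ring
    have k2 : Dz (crz b c) (crz c a) (crz a b) = Dz a b c ^ 3 * Dz x y z := by
      generalize Dz a b c = D at *
      simp only [Dz, hx, hy, hz]; ring
    have k3 : Dz a b c ^ 2 * 1 = Dz a b c ^ 2 * (Dz a b c * Dz x y z) := by
      linear_combination k2 - k1
    have k4 := mul_left_cancel₀ (pow_ne_zero 2 hD'.ne') k3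
    exact Int.eq_one_of_mul_eq_one_right hD'.le k4.symm
  · exfalso
    push Not at hdiv
    obtain ⟨x, hx⟩ := hdiv
    set D := Dz a b c with hDdef
    set r1 := Dz b c x % D with hr1
    set r2 := Dz c a x % D with hr2
    set r3 := Dz a b x % D with hr3
    have n1 : 0 ≤ r1 := Int.emod_nonneg _ hD'.ne'
    have n2 : 0 ≤ r2 := Int.emod_nonneg _ hD'.ne'
    have n3 : 0 ≤ r3 := Int.emod_nonneg _ hD'.ne'
    have l1 : r1 < D := Int.emod_lt_of_pos _ hD'
    have l2 : r2 < D := Int.emod_lt_of_pos _ hD'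
    have l3 : r3 < D := Int.emod_lt_of_pos _ hD'
    have q1 : r1 + D * (Dz b c x / D) = Dz b c x := Int.emod_add_mul_ediv _ _
    have q2 : r2 + D * (Dz c a x / D) = Dz c a x := Int.emod_add_mul_ediv _ _
    have q3 : r3 + D * (Dz a b x / D) = Dz a b x := Int.emod_add_mul_ediv _ _
    have hne : 0 < r1 + r2 + r3 := by
      by_contra hcon
      have z1 : r1 = 0 := by omega
      have z2 : r2 = 0 := by omega
      have z3 : r3 = 0 := by omega
      exact hx (Int.dvd_of_emod_eq_zero z1) (Int.dvd_of_emod_eq_zero z2) (Int.dvd_of_emod_eq_zero z3)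
    let p : Fin 3 → ℤ := fun i => x i - (Dz b c x / D) * a i - (Dz c a x / D) * b i - (Dz a b x / D) * c i
    have hp : ∀ i, D * p i = r1 * a i + r2 * b i + r3 * c i := by
      intro i
      have hcr : D * x i = Dz b c x * a i + Dz c a x * b i + Dz a b x * c i := by
        rw [hDdef]; fin_cases i <;> simp [Dz] <;> ring
      simp only [p]
      linear_combination hcr - a i * q1 - b i * q2 - c i * q3
    have hmp : D * (-dz m p) = r1 + r2 + r3 := by
      have : D * dz m p = r1 * dz m a + r2 * dz m b + r3 * dz m c := by
        unfold dz
        linear_combination m 0 * hp 0 + m 1 * hp 1 + m 2 * hp 2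
      rw [ma, mb, mc] at this; linarith
    have hk : 0 < -dz m p := by
      by_contra hcon
      have : -dz m p ≤ 0 := by omega
      nlinarith
    have hk3 : -dz m p < 3 := by
      by_contra hcon
      have : 3 ≤ -dz m p := by omega
      nlinarith
    have hk' : -dz m p = 1 ∨ -dz m p = 2 := by omega
    rcases hk' with hk' | hk'
    · rw [hk'] at hmp
      exact Tri_uni_aux hs hg h r1 r2 r3 n1 n2 n3 l1 l2 l3 (by linarith) hp
    · rw [hk'] at hmp
      refine Tri_uni_aux hs hg h (p := fun i => a i + b i + c i - p i) (D - r1) (D - r2) (D - r3)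
        (by omega) (by omega) (by omega) (by omega) (by omega) (by omega) (by omega) ?_
      intro i
      have := hp i
      rw [← hDdef]
      linear_combination -this

lemma ratio_test {u n : Fin 3 → ℝ} (hu : Feas V lam u) (hn : ∃ v ∈ V, dt n (coeLat v) < 0) :
    ∃ t : ℝ, ∃ d ∈ V, dt n (coeLat d) < 0 ∧ Feas V lam (u + t • n) ∧
      dt (u + t • n) (coeLat d) = - lam d := by
  classical
  have e : ∀ (t : ℝ) (x : Fin 3 → ℝ), dt (u + t • n) x = dt u x + t * dt n x := by
    intro t x; simp [dt]; ring
  have hne : (V.filter (fun v => dt n (coeLat v) < 0)).Nonempty := by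
    obtain ⟨v, hv, h⟩ := hn; exact ⟨v, by simp [hv, h]⟩
  obtain ⟨d, hd, hmin⟩ := Finset.exists_min_image _
    (fun v => (dt u (coeLat v) + lam v) / (- dt n (coeLat v))) hne
  obtain ⟨hdV, hdn⟩ := Finset.mem_filter.1 hd
  refine ⟨(dt u (coeLat d) + lam d) / (- dt n (coeLat d)), d, hdV, hdn, ?_, ?_⟩
  · have ht : 0 ≤ (dt u (coeLat d) + lam d) / (- dt n (coeLat d)) :=
      div_nonneg (by linarith [hu d hdV]) (by linarith)
    intro v hv
    rw [e]
    by_cases h : dt n (coeLat v) < 0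
    · have := hmin v (by simp [hv, h])
      rw [le_div_iff₀ (by linarith)] at this
      linarith
    · push Not at h
      have := mul_nonneg ht h
      linarith [hu v hv]
  · rw [e]
    have : dt n (coeLat d) ≠ 0 := hdn.ne
    field_simp
    ring

lemma Tri_step (hs : Setup V) {a b : Fin 3 → ℤ} {u : Fin 3 → ℝ} (ha : a ∈ V) (hb : b ∈ V)
    (hn : cr (coeLat a) (coeLat b) ≠ 0) (hu : Feas V lam u)
    (ua : dt u (coeLat a) = - lam a) (ub : dt u (coeLat b) = - lam b) :
    ∃ d, (b, a, d) ∈ Tri V lam := by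
  obtain ⟨t, d, hd, hdn, hf, hdt⟩ := ratio_test hu (hs.span _ hn)
  have e : ∀ (t : ℝ) (n x : Fin 3 → ℝ), dt (u + t • n) x = dt u x + t * dt n x := by
    intro t n x; simp [dt]; ring
  refine ⟨d, mem_Tri.2 ⟨hb, ha, hd, ?_, _, hf, ?_, ?_, hdt⟩⟩
  · rw [D3_swap, D3_eq_dt]; linarith
  · rw [e, ← D3_eq_dt, D3_self3, ub]; ring
  · rw [e, ← D3_eq_dt, D3_self2, ua]; ring

lemma Tri_cyc (hs : Setup V) (hg : Good V lam) : Cyc (Tri V lam) := by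
  refine ⟨?_, ?_, ?_, ?_⟩
  · intro a b c h
    obtain ⟨ha, hb, hc, hD, u, hf, ua, ub, uc⟩ := mem_Tri.1 h
    exact mem_Tri.2 ⟨hb, hc, ha, by rw [D3_rot]; exact hD, u, hf, ub, uc, ua⟩
  · intro a b c h
    rw [D3_coe, Tri_uni hs hg h]; simp
  · intro a b c h
    obtain ⟨ha, hb, hc, hD, u, hf, ua, ub, uc⟩ := mem_Tri.1 h
    refine Tri_step hs ha hb ?_ hf ua ub
    intro h0
    rw [D3_eq_dt, h0] at hD
    simp [dt] at hD
  · intro a b c c' h h'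
    obtain ⟨ha, hb, hc, hD, u, hf, ua, ub, uc⟩ := mem_Tri.1 h
    obtain ⟨-, -, hc', hD', u', hf', ua', ub', uc'⟩ := mem_Tri.1 h'
    by_contra hne
    have k1 : - lam c' < dt u (coeLat c') := by
      refine lt_of_le_of_ne (hf c' hc') (fun h0 => ?_)
      rcases tight_mem hg ha hb hc hc' hD ua ub uc h0.symm with rfl | rfl | rfl
      · rw [D3_self2] at hD'; exact lt_irrefl _ hD'
      · rw [D3_self3] at hD'; exact lt_irrefl _ hD'
      · exact hne rfl
    have k2 := hf' c hc
    have e : ∀ (x : Fin 3 → ℝ), dt (u' - u) x = dt u' x - dt u x := by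
      intro x; simp [dt]; ring
    have hcr := cramer_dt (coeLat a) (coeLat b) (coeLat c) (coeLat c') (u' - u)
    rw [e, e, e, e, ua, ub, ua', ub', uc, uc'] at hcr
    nlinarith [mul_pos hD (sub_pos.2 k1), mul_nonneg hD'.le (sub_nonneg.2 k2)]

lemma Tri_nonempty (hs : Setup V) (hg : Good V lam) : (Tri V lam).Nonempty := by
  have e : ∀ (u : Fin 3 → ℝ) (t : ℝ) (n x : Fin 3 → ℝ), dt (u + t • n) x = dt u x + t * dt n x := by
    intro u t n x; simp [dt]; ring
  have hf0 : Feas V lam 0 := by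
    intro v hv
    have := hg.pos v hv
    simp [dt]; linarith
  obtain ⟨t, a, ha, han, hf1, hat⟩ := ratio_test hf0 (hs.span (Pi.single 0 1)
    (by intro h; have := congrFun h 0; simp at this))
  have ha0 : coeLat a 0 ≠ 0 := by
    simp [dt] at han; exact han.ne
  have hn : (![coeLat a 1, - coeLat a 0, 0] : Fin 3 → ℝ) ≠ 0 := by
    intro h; have := congrFun h 1; simp at this; exact ha0 this
  obtain ⟨t', b, hb, hbn, hf2, hbt⟩ := ratio_test hf1 (hs.span _ hn)
  obtain ⟨d, hd⟩ := Tri_step hs ha hb (u := (0 + t • Pi.single 0 1) + t' • ![coeLat a 1, - coeLat a 0, 0])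
    (by
      intro h
      have h2 := congrFun h 2
      simp [cr] at h2
      simp [dt] at hbn
      linarith) hf2 (by
      rw [e, hat]; simp [dt]; right; ring) hbt
  exact ⟨_, hd⟩

/-- the open cone over a triangle meets only rotations of that triangle -/
lemma Tri_overlap (hg : Good V lam) {a b c a' b' c' : Fin 3 → ℤ} (h : (a, b, c) ∈ Tri V lam)
    (h' : (a', b', c') ∈ Tri V lam) (ξ : Fin 3 → ℝ)
    (x1 : 0 < D3 (coeLat b) (coeLat c) ξ) (x2 : 0 < D3 (coeLat c) (coeLat a) ξ)
    (x3 : 0 < D3 (coeLat a) (coeLat b) ξ)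
    (y1 : 0 < D3 (coeLat b') (coeLat c') ξ) (y2 : 0 < D3 (coeLat c') (coeLat a') ξ)
    (y3 : 0 < D3 (coeLat a') (coeLat b') ξ) :
    (a', b', c') = (a, b, c) ∨ (a', b', c') = (b, c, a) ∨ (a', b', c') = (c, a, b) := by
  obtain ⟨ha, hb, hc, hD, u, hf, ua, ub, uc⟩ := mem_Tri.1 h
  obtain ⟨ha', hb', hc', hD', u', hf', ua', ub', uc'⟩ := mem_Tri.1 h'
  have e : ∀ (x : Fin 3 → ℝ), dt (u' - u) x = dt u' x - dt u x := by
    intro x; simp [dt]; ring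
  have c1 := cramer_dt (coeLat a) (coeLat b) (coeLat c) ξ (u' - u)
  have c2 := cramer_dt (coeLat a') (coeLat b') (coeLat c') ξ (u' - u)
  have p1 : 0 ≤ dt (u' - u) ξ := by
    have : 0 ≤ D3 (coeLat a) (coeLat b) (coeLat c) * dt (u' - u) ξ := by
      rw [c1, e, e, e, ua, ub, uc]
      have := mul_nonneg x1.le (sub_nonneg.2 (hf' a ha))
      have := mul_nonneg x2.le (sub_nonneg.2 (hf' b hb))
      have := mul_nonneg x3.le (sub_nonneg.2 (hf' c hc))
      linarith
    exact nonneg_of_mul_nonneg_right this hD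
  have q1 := mul_nonneg y1.le (sub_nonneg.2 (hf a' ha'))
  have q2 := mul_nonneg y2.le (sub_nonneg.2 (hf b' hb'))
  have q3 := mul_nonneg y3.le (sub_nonneg.2 (hf c' hc'))
  have p2 := mul_nonneg hD'.le p1
  rw [c2, e, e, e, ua', ub', uc'] at p2
  have z1 : dt u (coeLat a') = - lam a' := by
    have : D3 (coeLat b') (coeLat c') ξ * (dt u (coeLat a') - - lam a') = 0 := by linarith
    have := (mul_eq_zero.1 this).resolve_left y1.ne'
    linarith
  have z2 : dt u (coeLat b') = - lam b' := by
    have : D3 (coeLat c') (coeLat a') ξ * (dt u (coeLat b') - - lam b') = 0 := by linarith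
    have := (mul_eq_zero.1 this).resolve_left y2.ne'
    linarith
  have z3 : dt u (coeLat c') = - lam c' := by
    have : D3 (coeLat a') (coeLat b') ξ * (dt u (coeLat c') - - lam c') = 0 := by linarith
    have := (mul_eq_zero.1 this).resolve_left y3.ne'
    linarith
  have w1 := tight_mem hg ha hb hc ha' hD ua ub uc z1
  have w2 := tight_mem hg ha hb hc hb' hD ua ub uc z2
  have w3 := tight_mem hg ha hb hc hc' hD ua ub uc z3
  clear c1 c2 q1 q2 q3 p1 p2 z1 z2 z3 y1 y2 y3 x1 x2 x3 h h' e hf hf' ua ub uc ua' ub' uc'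
  rw [D3_coe] at hD hD'
  have hD1 : 0 < Dz a b c := by exact_mod_cast hD
  have hD1' : 0 < Dz a' b' c' := by exact_mod_cast hD'
  clear hD hD'
  rcases w1 with rfl | rfl | rfl <;> rcases w2 with rfl | rfl | rfl <;>
    rcases w3 with rfl | rfl | rfl <;>
    first
    | (simp; done)
    | (exfalso; unfold Dz at hD1 hD1'; nlinarith)

lemma Tri_degree (hs : Setup V) (hg : Good V lam) :
    ∃ U : Set (Fin 3 → ℝ), IsOpen U ∧ U.Nonempty ∧ ∀ ξ ∈ U, Gen (Tri V lam) ξ → Ncount (Tri V lam) ξ 0 = 3 := by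
  classical
  obtain ⟨⟨a, b, c⟩, h⟩ := Tri_nonempty hs hg
  have hc := Tri_cyc hs hg
  have hD := hc.uni _ _ _ h
  have h' := hc.rot _ _ _ h
  have h'' := hc.rot _ _ _ h'
  refine ⟨{ξ | 0 < D3 (coeLat b) (coeLat c) ξ} ∩ ({ξ | 0 < D3 (coeLat c) (coeLat a) ξ} ∩
    {ξ | 0 < D3 (coeLat a) (coeLat b) ξ}), ?_, ?_, ?_⟩
  · exact (isOpen_lt continuous_const (D3_cont _ _)).inter
      ((isOpen_lt continuous_const (D3_cont _ _)).inter (isOpen_lt continuous_const (D3_cont _ _)))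
  · refine ⟨coeLat a + coeLat b + coeLat c, ?_, ?_, ?_⟩
    · have : D3 (coeLat b) (coeLat c) (coeLat a + coeLat b + coeLat c) = 1 := by
        rw [← hD]; simp only [D3, Pi.add_apply]; ring
      simp only [Set.mem_ofPred_eq, this]; norm_num
    · have : D3 (coeLat c) (coeLat a) (coeLat a + coeLat b + coeLat c) = 1 := by
        rw [← hD]; simp only [D3, Pi.add_apply]; ring
      simp only [Set.mem_ofPred_eq, this]; norm_num
    · have : D3 (coeLat a) (coeLat b) (coeLat a + coeLat b + coeLat c) = 1 := by
        rw [← hD]; simp only [D3, Pi.add_apply]; ring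
      simp only [Set.mem_ofPred_eq, this]; norm_num
  · rintro ξ ⟨x1, x2, x3⟩ -
    simp only [Set.mem_ofPred_eq] at x1 x2 x3
    have hab : a ≠ b := by rintro rfl; rw [D3_self1] at hD; norm_num at hD
    have hac : a ≠ c := by rintro rfl; rw [D3_self2] at hD; norm_num at hD
    have hbc : b ≠ c := by rintro rfl; rw [D3_self3] at hD; norm_num at hD
    have d0 : ∀ x : Fin 3 → ℝ, dt 0 x = 0 := by intro x; simp [dt]
    unfold Ncount
    have hsub : ({(a, b, c), (b, c, a), (c, a, b)} :
        Finset ((Fin 3 → ℤ) × (Fin 3 → ℤ) × (Fin 3 → ℤ))) ⊆ Tri V lam := by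
      intro t ht
      simp only [Finset.mem_insert, Finset.mem_singleton] at ht
      rcases ht with rfl | rfl | rfl <;> assumption
    rw [← Finset.sum_subset hsub]
    · rw [Finset.sum_insert, Finset.sum_insert, Finset.sum_singleton]
      · simp [chiProd, chi, d0, pos01, neg01, x1, x2, x3]; norm_num
      · simp [hbc]
      · simp [hab, hac]
    · rintro ⟨a', b', c'⟩ ht hn
      by_contra hne
      have key : ∀ x : ℝ, chi x 0 ≠ 0 → 0 < x := by
        intro x hx
        unfold chi pos01 neg01 at hx
        by_contra hcon
        simp [hcon] at hx
      simp only [chiProd, d0] at hne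
      have k1 := key _ (left_ne_zero_of_mul (left_ne_zero_of_mul hne))
      have k2 := key _ (right_ne_zero_of_mul (left_ne_zero_of_mul hne))
      have k3 := key _ (right_ne_zero_of_mul hne)
      apply hn
      have := Tri_overlap hg h ht ξ x1 x2 x3 k1 k2 k3
      simpa only [Finset.mem_insert, Finset.mem_singleton] using this

lemma Tri_exists_gen (hs : Setup V) (hg : Good V lam) (U : Set (Fin 3 → ℝ)) (hU : IsOpen U)
    (hUn : U.Nonempty) : ∃ ξ ∈ U, Gen (Tri V lam) ξ := by
  obtain ⟨x, hx, hx'⟩ := exists_generic (Tri V lam) (fun t => D3lin (coeLat t.1) (coeLat t.2.1))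
    (fun t => D3_cont _ _) (fun _ => 0) (by
      rintro ⟨a, b, c⟩ ht
      exact D3lin_ne (coeLat c) (by rw [(Tri_cyc hs hg).uni _ _ _ ht]; norm_num)) U hU hUn
  exact ⟨x, hx, hx'⟩

lemma Tri_cover (hs : Setup V) (hg : Good V lam) (ξ : Fin 3 → ℝ) :
    ∃ a b c, (a, b, c) ∈ Tri V lam ∧ 0 ≤ D3 (coeLat b) (coeLat c) ξ ∧
      0 ≤ D3 (coeLat c) (coeLat a) ξ ∧ 0 ≤ D3 (coeLat a) (coeLat b) ξ := by
  classical
  let C : Set (Fin 3 → ℝ) := ⋃ t ∈ Tri V lam, ({ξ | 0 ≤ D3 (coeLat t.2.1) (coeLat t.2.2) ξ} ∩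
    ({ξ | 0 ≤ D3 (coeLat t.2.2) (coeLat t.1) ξ} ∩ {ξ | 0 ≤ D3 (coeLat t.1) (coeLat t.2.1) ξ}))
  have hC : IsClosed C := by
    refine isClosed_biUnion_finset (fun t _ => ?_)
    exact (isClosed_le continuous_const (D3_cont _ _)).inter
      ((isClosed_le continuous_const (D3_cont _ _)).inter
        (isClosed_le continuous_const (D3_cont _ _)))
  by_cases hξ : ξ ∈ C
  · simp only [C, Set.mem_iUnion] at hξ
    obtain ⟨⟨a, b, c⟩, ht, h1, h2, h3⟩ := hξ
    exact ⟨a, b, c, ht, h1, h2, h3⟩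
  · exfalso
    obtain ⟨ξ', hn, hgen⟩ := Tri_exists_gen hs hg Cᶜ hC.isOpen_compl ⟨ξ, hξ⟩
    obtain ⟨U, hU, hUn, hdeg⟩ := Tri_degree hs hg
    have := (Tri_cyc hs hg).N_deg U hU hUn hdeg ξ' hgen
    have hne : Ncount (Tri V lam) ξ' 0 ≠ 0 := by rw [this]; norm_num
    obtain ⟨⟨a, b, c⟩, ht, hne⟩ := Finset.exists_ne_zero_of_sum_ne_zero hne
    have d0 : ∀ x : Fin 3 → ℝ, dt 0 x = 0 := by intro x; simp [dt]
    have key : ∀ x : ℝ, chi x 0 ≠ 0 → 0 < x := by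
      intro x hx
      unfold chi pos01 neg01 at hx
      by_contra hcon
      simp [hcon] at hx
    simp only [chiProd, d0] at hne
    have k1 := key _ (left_ne_zero_of_mul (left_ne_zero_of_mul hne))
    have k2 := key _ (right_ne_zero_of_mul (left_ne_zero_of_mul hne))
    have k3 := key _ (right_ne_zero_of_mul hne)
    apply hn
    simp only [C, Set.mem_iUnion]
    exact ⟨(a, b, c), ht, k1.le, k2.le, k3.le⟩

/-! ### From reflexive polytopes to triangulations -/

structure RData (Δ : Set (Fin 3 → ℝ)) (V : Finset (Fin 3 → ℤ)) : Prop where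
  setup : Setup V
  memV : ∀ p, p ∈ V ↔ p ≠ 0 ∧ coeLat p ∈ Δ
  polar : ∀ y, y ∈ polarDual Δ ↔ ∀ v ∈ V, -1 ≤ dt y (coeLat v)
  hull : ∀ C : Set (Fin 3 → ℝ), Convex ℝ C → (0 : Fin 3 → ℝ) ∈ C → (∀ v ∈ V, coeLat v ∈ C) → Δ ⊆ C
  int0 : (0 : Fin 3 → ℝ) ∈ interior Δ

def dtlin (u : Fin 3 → ℝ) : (Fin 3 → ℝ) →ₗ[ℝ] ℝ where
  toFun := dt u
  map_add' x y := by simp only [dt, Pi.add_apply]; ring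
  map_smul' r x := by simp only [dt, Pi.smul_apply, smul_eq_mul, RingHom.id_apply]; ring

lemma dtlin_apply (u x : Fin 3 → ℝ) : dtlin u x = dt u x := rfl

lemma dt_eq_of_basis {a b c u w : Fin 3 → ℝ} (h : D3 a b c ≠ 0) (ha : dt u a = dt w a)
    (hb : dt u b = dt w b) (hc : dt u c = dt w c) : u = w := by
  have key : ∀ x, D3 a b c * dt u x = D3 a b c * dt w x := by
    intro x; rw [cramer_dt a b c x u, cramer_dt a b c x w, ha, hb, hc]
  funext i
  have h1 := mul_left_cancel₀ h (key (Pi.single i 1))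
  have e : ∀ u : Fin 3 → ℝ, dt u (Pi.single i 1) = u i := by
    intro u; rw [← dt_sum]; simp [Pi.single_apply]
  rwa [e, e] at h1

lemma reflexive_data (Δ : Set (Fin 3 → ℝ)) (hΔ : IsReflexive Δ) : ∃ V, RData Δ V := by
  classical
  obtain ⟨⟨V0, hV0⟩, h0, ⟨W, hW⟩⟩ := hΔ
  have hconv : Convex ℝ Δ := by rw [hV0]; exact convex_convexHull _ _
  have hcomp : IsCompact Δ := by
    rw [hV0]; exact (V0.finite_toSet.image _).isCompact_convexHull (𝕜 := ℝ)
  have hfin : (latticePoints Δ).Finite := by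
    obtain ⟨R, hR⟩ := hcomp.isBounded.exists_norm_le
    refine (Set.finite_Icc (fun _ : Fin 3 => -⌈R⌉) (fun _ => ⌈R⌉)).subset ?_
    intro n hn
    have h1 := hR _ hn
    have h2 : ∀ i, |(n i : ℝ)| ≤ R := fun i => (norm_le_pi_norm (coeLat n) i).trans h1
    have h3 : ∀ i, |n i| ≤ ⌈R⌉ := by
      intro i
      have := (h2 i).trans (Int.le_ceil R)
      exact_mod_cast this
    exact ⟨fun i => (abs_le.1 (h3 i)).1, fun i => (abs_le.1 (h3 i)).2⟩
  set V := hfin.toFinset.erase 0 with hV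
  have memV : ∀ p, p ∈ V ↔ p ≠ 0 ∧ coeLat p ∈ Δ := by
    intro p; simp [hV, latticePoints]
  have hull : ∀ C : Set (Fin 3 → ℝ), Convex ℝ C → (0 : Fin 3 → ℝ) ∈ C →
      (∀ v ∈ V, coeLat v ∈ C) → Δ ⊆ C := by
    intro C hC hC0 hCV
    rw [hV0]
    refine convexHull_min ?_ hC
    rintro _ ⟨p, hp, rfl⟩
    by_cases hp0 : p = 0
    · have : coeLat p = 0 := by rw [hp0]; funext i; simp [coeLat]
      rw [this]; exact hC0
    · exact hCV p ((memV p).2 ⟨hp0, by rw [hV0]; exact subset_convexHull _ _ ⟨p, hp, rfl⟩⟩)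
  have half : ∀ (y : Fin 3 → ℝ) (s : ℝ), Convex ℝ {x | s ≤ dt y x} := by
    intro y s
    exact convex_halfSpace_ge (dtlin y).isLinear s
  have polar : ∀ y, y ∈ polarDual Δ ↔ ∀ v ∈ V, -1 ≤ dt y (coeLat v) := by
    intro y
    constructor
    · intro hy v hv
      have := hy _ ((memV v).1 hv).2
      rwa [dt_sum] at this
    · intro hy x hx
      rw [dt_sum]
      exact hull _ (half y (-1)) (by simp [dt]) hy hx
  refine ⟨V, ⟨?_, ?_, ?_⟩, memV, polar, hull, h0⟩
  · intro n hn
    by_contra hcon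
    push Not at hcon
    have hsub := hull _ (half n 0) (by simp [dt]) hcon
    have hc : Continuous (fun t : ℝ => (-t) • n) := by fun_prop
    have hev : ∀ᶠ t : ℝ in nhds 0, (-t) • n ∈ Δ :=
      hc.continuousAt.eventually_mem (by simpa using mem_interior_iff_mem_nhds.1 h0)
    have hev2 : ∀ᶠ t : ℝ in nhdsWithin 0 (Set.Ioi 0), (-t) • n ∈ Δ :=
      hev.filter_mono nhdsWithin_le_nhds
    obtain ⟨t, ht, ht0⟩ := (hev2.and self_mem_nhdsWithin).exists
    have h1 : 0 ≤ dt n ((-t) • n) := hsub ht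
    have ht1 : 0 < t := ht0
    have h2 : dt n ((-t) • n) = -t * (n 0 * n 0 + n 1 * n 1 + n 2 * n 2) := by
      simp [dt]; ring
    have h3 : 0 < n 0 * n 0 + n 1 * n 1 + n 2 * n 2 := by
      have : ∃ i, n i ≠ 0 := by
        by_contra hcon; push Not at hcon; exact hn (funext hcon)
      obtain ⟨i, hi⟩ := this
      have hp := mul_self_pos.2 hi
      have h0 := mul_self_nonneg (n 0)
      have h1 := mul_self_nonneg (n 1)
      have h2 := mul_self_nonneg (n 2)
      have h3 : i = 0 ∨ i = 1 ∨ i = 2 := by fin_cases i <;> simp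
      rcases h3 with rfl | rfl | rfl <;> linarith
    rw [h2] at h1
    nlinarith
  · intro u hu a ha b hb c hc hD ua ub uc
    have hup : u ∈ polarDual Δ := (polar u).2 hu
    have hext : u ∈ (polarDual Δ).extremePoints ℝ := by
      refine ⟨hup, ?_⟩
      intro x hx y hy hseg
      rw [polar] at hx hy
      obtain ⟨s, t, hs, ht, hst, rfl⟩ := hseg
      have e : ∀ z, dt (s • x + t • y) z = s * dt x z + t * dt y z := by
        intro z; simp [dt]; ring
      have key : ∀ v ∈ V, dt (s • x + t • y) (coeLat v) = -1 → dt x (coeLat v) = -1 := by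
        intro v hv h
        rw [e] at h
        have h1 := hx v hv
        have h2 := mul_nonneg ht.le (sub_nonneg.2 (hy v hv))
        have h3 := mul_nonneg hs.le (sub_nonneg.2 h1)
        have h4 : s * (dt x (coeLat v) - -1) = 0 := by
          have : t = 1 - s := by linarith
          subst this
          nlinarith
        have := (mul_eq_zero.1 h4).resolve_left hs.ne'
        linarith
      exact dt_eq_of_basis hD (by rw [key a ha ua, ua]) (by rw [key b hb ub, ub])
        (by rw [key c hc uc, uc])
    rw [hW] at hext
    obtain ⟨m, -, hm⟩ := extremePoints_convexHull_subset hext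
    exact ⟨m, hm.symm⟩
  · intro p hp a ha b hb c hc α β γ hα hβ hγ hsum hcomb
    refine (memV p).2 ⟨hp, ?_⟩
    rw [hcomb]
    have ha' := ((memV a).1 ha).2
    have hb' := ((memV b).1 hb).2
    have hc' := ((memV c).1 hc).2
    have := hconv.sum_mem (t := Finset.univ) (w := ![α, β, γ]) (z := ![coeLat a, coeLat b, coeLat c])
      (by intro i _; fin_cases i <;> simpa) (by simp [Fin.sum_univ_three, hsum])
      (by intro i _; fin_cases i <;> simpa)
    simpa [Fin.sum_univ_three] using this

/-- the dual edge -/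
def EStar (Δ : Set (Fin 3 → ℝ)) (a b : Fin 3 → ℤ) : Set (Fin 3 → ℝ) :=
  {y | y ∈ polarDual Δ ∧ dt y (coeLat a) = -1 ∧ dt y (coeLat b) = -1}

variable {Δ : Set (Fin 3 → ℝ)}

/-- the data of two adjacent triangles -/
lemma edge_data (hr : RData Δ V) (hg : Good V lam) {a b c d : Fin 3 → ℤ}
    (h : (a, b, c) ∈ Tri V lam) (h' : (b, a, d) ∈ Tri V lam) :
    ∃ (m : Fin 3 → ℤ) (l : ℤ), 0 ≤ l ∧ dz m a = -1 ∧ dz m b = -1 ∧ dz m c = -1 ∧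
      (∀ v ∈ V, -1 ≤ dz m v) ∧ (∀ v ∈ V, -1 ≤ dz m v + l * Dz a b v) ∧
      dz m d + l * Dz a b d = -1 ∧ Dz a b c = 1 ∧ Dz a b d = -1 := by
  obtain ⟨m, ma, mb, mc, mv⟩ := Tri_fun hr.setup hg h
  obtain ⟨m', mb', ma', md', mv'⟩ := Tri_fun hr.setup hg h'
  have hD := Tri_uni hr.setup hg h
  have hD' := Tri_uni hr.setup hg h'
  have hDs : Dz a b d = - Dz b a d := by unfold Dz; ring
  have hcV := (mem_Tri.1 h).2.2.1
  have hc1 := mv' c hcV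
  have key : ∀ v, dz m' v = dz m v + (dz m' c + 1) * Dz a b v := by
    intro v
    have cr1 : Dz a b c * (dz m' v) = Dz b c v * dz m' a + Dz c a v * dz m' b + Dz a b v * dz m' c := by
      simp only [Dz, dz]; ring
    have cr2 : Dz a b c * (dz m v) = Dz b c v * dz m a + Dz c a v * dz m b + Dz a b v * dz m c := by
      simp only [Dz, dz]; ring
    rw [hD, ma', mb'] at cr1
    rw [hD, ma, mb, mc] at cr2
    linear_combination cr1 - cr2
  refine ⟨m, dz m' c + 1, by linarith, ma, mb, mc, mv, ?_, ?_, hD, by rw [hDs, hD']⟩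
  · intro v hv; rw [← key]; exact mv' v hv
  · rw [← key]; exact md'

lemma EStar_lattice (hr : RData Δ V) {a b c d m : Fin 3 → ℤ} {l : ℤ} (hc : c ∈ V) (hd : d ∈ V)
    (hl : 0 ≤ l) (ma : dz m a = -1) (mb : dz m b = -1) (mc : dz m c = -1)
    (mv : ∀ v ∈ V, -1 ≤ dz m v) (mv' : ∀ v ∈ V, -1 ≤ dz m v + l * Dz a b v)
    (md : dz m d + l * Dz a b d = -1) (hD : Dz a b c = 1) (hD' : Dz a b d = -1) :
    ((latticePoints (EStar Δ a b)).ncard : ℝ) - 1 = l := by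
  have hz : ∀ x : Fin 3 → ℤ, ∀ k : ℤ, dz (fun i => m i + k * crz a b i) x = dz m x + k * Dz a b x := by
    intro x k; simp [Dz, dz, crz]; ring
  have hset : latticePoints (EStar Δ a b) =
      (fun k : ℤ => (fun i => m i + k * crz a b i : Fin 3 → ℤ)) '' (Set.Icc 0 l) := by
    ext y
    simp only [latticePoints, EStar, Set.mem_ofPred_eq, hr.polar, dt_coe, Set.mem_image, Set.mem_Icc]
    constructor
    · rintro ⟨h1, h2, h3⟩
      have h1' : ∀ v ∈ V, -1 ≤ dz y v := fun v hv => by exact_mod_cast h1 v hv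
      have h2' : dz y a = -1 := by exact_mod_cast h2
      have h3' : dz y b = -1 := by exact_mod_cast h3
      have hy : (fun i => m i + (dz y c + 1) * crz a b i) = y := by
        apply (evalEquiv a b c hD).injective
        have ea : Dz a b a = 0 := by unfold Dz; ring
        have eb : Dz a b b = 0 := by unfold Dz; ring
        simp only [evalEquiv, Equiv.coe_fn_mk, Prod.mk.injEq, hz, ea, eb, hD, ma, mb, mc, h2', h3']
        refine ⟨by ring, by ring, by ring⟩
      refine ⟨dz y c + 1, ⟨by linarith [h1' c hc], ?_⟩, hy⟩
      have h4 := h1' d hd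
      rw [← hy, hz, hD'] at h4
      rw [hD'] at md
      linarith
    · rintro ⟨k, ⟨hk0, hkl⟩, rfl⟩
      have ea : Dz a b a = 0 := by unfold Dz; ring
      have eb : Dz a b b = 0 := by unfold Dz; ring
      refine ⟨?_, ?_, ?_⟩
      · intro v hv
        have h1 := mv v hv
        have h2 := mv' v hv
        have : -1 ≤ dz (fun i => m i + k * crz a b i) v := by
          rw [hz]
          rcases le_total 0 (Dz a b v) with h0 | h0
          · have := mul_nonneg hk0 h0; linarith
          · have := mul_nonneg (sub_nonneg.2 hkl) (neg_nonneg.2 h0); nlinarith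
        exact_mod_cast this
      · rw [hz, ea, ma]; simp
      · rw [hz, eb, mb]; simp
  rw [hset, Set.ncard_image_of_injective]
  · rw [Set.ncard_eq_toFinset_card']
    simp only [Set.toFinset_Icc, Int.card_Icc]
    have : ((l + 1 - 0).toNat : ℤ) = l + 1 := by rw [Int.toNat_of_nonneg] <;> linarith
    have h2 : ((l + 1 - 0).toNat : ℝ) = l + 1 := by exact_mod_cast this
    rw [h2]; ring
  · intro k k' hkk
    have h1 := hz c k
    have h2 := hz c k'
    simp only at hkk
    rw [hkk, h2, hD] at h1
    linarith

lemma sum48 (hr : RData Δ V) (hg : Good V lam) :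
    ∑ t ∈ Tri V lam, (((latticePoints (EStar Δ t.1 t.2.1)).ncard : ℝ) - 1) = 48 := by
  classical
  have hs := hr.setup
  have hc := Tri_cyc hs hg
  obtain ⟨ξ, -, hξ⟩ := Tri_exists_gen hs hg Set.univ isOpen_univ ⟨0, trivial⟩
  obtain ⟨U, hU, hUn, hdeg⟩ := Tri_degree hs hg
  have hcore := hc.core U hU hUn hdeg ξ hξ
  let F : (Fin 3 → ℤ) → (Fin 3 → ℤ) → (Fin 3 → ℤ) → ℝ := fun a b c =>
    (D3 (coeLat b) (coeLat c) ξ + D3 (coeLat c) (coeLat a) ξ + D3 (coeLat a) (coeLat b) ξ) /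
      D3 (coeLat a) (coeLat b) ξ
  have h24 : ∑ t ∈ Tri V lam, F t.1 t.2.1 t.2.2 = 24 := by
    have r1 := hc.sum_rot F
    have r2 := hc.sum_rot (fun a b c => F b c a)
    have : ∑ t ∈ Tri V lam, (F t.2.1 t.2.2 t.1 + F t.2.2 t.1 t.2.1 + F t.1 t.2.1 t.2.2) = 72 := by
      rw [← hcore]
      refine Finset.sum_congr rfl (fun t _ => ?_)
      simp only [F]; ring
    rw [Finset.sum_add_distrib, Finset.sum_add_distrib] at this
    linarith
  have hth : ∀ a b : Fin 3 → ℤ, ∃ c, ∀ c', (a, b, c') ∈ Tri V lam → c' = c := by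
    intro a b
    by_cases h : ∃ c, (a, b, c) ∈ Tri V lam
    · obtain ⟨c, h⟩ := h
      exact ⟨c, fun c' h' => hc.uniq _ _ _ _ h' h⟩
    · exact ⟨0, fun c' h' => absurd ⟨c', h'⟩ h⟩
  choose κ hκ using hth
  let K : (Fin 3 → ℤ) → (Fin 3 → ℤ) → ℝ := fun a b => F a b (κ a b)
  have hK : ∑ t ∈ Tri V lam, K t.1 t.2.1 = 24 := by
    rw [← h24]
    refine Finset.sum_congr rfl ?_
    rintro ⟨a, b, c⟩ ht
    simp only [K]; rw [← hκ a b c ht]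
  have hK2 := hc.sum_swap K
  have : ∑ t ∈ Tri V lam, (((latticePoints (EStar Δ t.1 t.2.1)).ncard : ℝ) - 1) =
      ∑ t ∈ Tri V lam, (K t.1 t.2.1 + K t.2.1 t.1) := by
    refine Finset.sum_congr rfl ?_
    rintro ⟨a, b, c⟩ ht
    obtain ⟨d, hd⟩ := hc.adj _ _ _ ht
    obtain ⟨m, l, hl, ma, mb, mc, mv, mv', md, hD, hD'⟩ := edge_data hr hg ht hd
    rw [EStar_lattice hr (mem_Tri.1 ht).2.2.1 (mem_Tri.1 hd).2.2.1 hl ma mb mc mv mv' md hD hD']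
    simp only [K, F]
    rw [← hκ a b c ht, ← hκ b a d hd, D3_swap (coeLat a) (coeLat b) ξ]
    have hne := hξ _ ht
    simp only at hne
    have maR : dt (coeLat m) (coeLat a) = -1 := by rw [dt_coe, ma]; simp
    have mbR : dt (coeLat m) (coeLat b) = -1 := by rw [dt_coe, mb]; simp
    have mcR : dt (coeLat m) (coeLat c) = -1 := by rw [dt_coe, mc]; simp
    have mdR : dt (coeLat m) (coeLat d) = -1 + l := by
      rw [dt_coe]; rw [hD'] at md
      have : dz m d = -1 + l := by linarith
      rw [this]; push_cast; ring
    have c1 := cramer_dt (coeLat a) (coeLat b) (coeLat c) ξ (coeLat m)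
    have c2 := cramer_dt (coeLat b) (coeLat a) (coeLat d) ξ (coeLat m)
    rw [hc.uni _ _ _ ht, maR, mbR, mcR] at c1
    rw [hc.uni _ _ _ hd, maR, mbR, mdR, D3_swap (coeLat a) (coeLat b) ξ] at c2
    field_simp
    linarith
  rw [this, Finset.sum_add_distrib]
  linarith

/-! ### Faces and edges -/

/-- the smallest face containing `a` and `b` -/
def Th (Δ : Set (Fin 3 → ℝ)) (a b : Fin 3 → ℤ) : Set (Fin 3 → ℝ) :=
  {x | x ∈ Δ ∧ ∀ y ∈ EStar Δ a b, dt y x = -1}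

/-- the edges of the triangulation, with both orientations -/
def Edg (V : Finset (Fin 3 → ℤ)) (lam : (Fin 3 → ℤ) → ℝ) (a b : Fin 3 → ℤ) : Prop :=
  ∃ c, (a, b, c) ∈ Tri V lam

lemma Edg.symm (hr : RData Δ V) (hg : Good V lam) {a b : Fin 3 → ℤ} (h : Edg V lam a b) :
    Edg V lam b a := by
  obtain ⟨c, h⟩ := h
  exact (Tri_cyc hr.setup hg).adj _ _ _ h

lemma Edg.ne (hr : RData Δ V) (hg : Good V lam) {a b : Fin 3 → ℤ} (h : Edg V lam a b) : a ≠ b := by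
  obtain ⟨c, h⟩ := h
  rintro rfl
  have := Tri_uni hr.setup hg h
  have h2 : Dz a a c = 0 := by unfold Dz; ring
  omega

lemma Edg.no_between (hr : RData Δ V) (hg : Good V lam) {a b p : Fin 3 → ℤ} (h : Edg V lam a b)
    (hp : p ∈ V) (s : ℝ) (h0 : 0 ≤ s) (h1 : s ≤ 1)
    (hcomb : coeLat p = (1 - s) • coeLat a + s • coeLat b) : p = a ∨ p = b := by
  obtain ⟨c, h⟩ := h
  rcases Tri_empty hg h hp (1 - s) s 0 (by linarith) h0 le_rfl (by ring)
    (by rw [hcomb]; simp) with rfl | rfl | rfl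
  · left; rfl
  · right; rfl
  · exfalso
    have h2 := (Tri_cyc hr.setup hg).uni _ _ _ h
    rw [hcomb] at h2
    have : D3 (coeLat a) (coeLat b) ((1 - s) • coeLat a + s • coeLat b) = 0 := by
      simp only [D3, Pi.add_apply, Pi.smul_apply, smul_eq_mul]; ring
    rw [this] at h2; norm_num at h2

/-- The normal form of an edge of the polytope. -/
structure EdgeForm (Δ : Set (Fin 3 → ℝ)) (θ : Set (Fin 3 → ℝ)) (y0 : Fin 3 → ℝ) (i : Fin 3)
    (w : Fin 3 → ℝ) : Prop where
  hy : y0 ∈ polarDual Δ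
  eq : θ = {x | x ∈ Δ ∧ dt y0 x = -1}
  col : ∀ x ∈ θ, ∀ x' ∈ θ, ∀ j, x j - x' j = (x i - x' i) * w j

lemma exists_edgeForm (hr : RData Δ V) (hdim : dimSet Δ = 3) {θ : Set (Fin 3 → ℝ)}
    (hθ : IsFaceOfDim Δ 1 θ) : ∃ y0 i w, EdgeForm Δ θ y0 i w := by
  obtain ⟨hexp, hne, hd⟩ := hθ
  obtain ⟨l, hl⟩ := hexp hne
  have hlin : ∀ x, l x = dt (fun i => l (Pi.single i 1)) x := by
    intro x
    rw [← dt_sum]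
    conv_lhs => rw [pi_eq_sum_univ' x]
    rw [map_sum]
    refine Finset.sum_congr rfl (fun i _ => ?_)
    rw [map_smul, smul_eq_mul, mul_comm]
  set n : Fin 3 → ℝ := fun i => l (Pi.single i 1) with hn
  obtain ⟨x0, hx0⟩ := hne
  have hx0' := hx0
  rw [hl] at hx0'
  have h0Δ : (0 : Fin 3 → ℝ) ∈ Δ := interior_subset hr.int0
  have hμ0 : 0 ≤ l x0 := by
    have := hx0'.2 0 h0Δ; simpa using this
  have hμ : 0 < l x0 := by
    refine lt_of_le_of_ne hμ0 (fun heq => ?_)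
    by_cases hn0 : n = 0
    · have : θ = Δ := by
        rw [hl]; ext x; simp only [Set.mem_ofPred_eq]
        refine ⟨fun h => h.1, fun h => ⟨h, fun y _ => ?_⟩⟩
        rw [hlin x, hlin y, hn0]; simp [dt]
      rw [this] at hd; omega
    · obtain ⟨v, hv, hvn⟩ := hr.setup.span (-n) (by simpa using hn0)
      have h1 := hx0'.2 _ ((hr.memV v).1 hv).2
      rw [← heq, hlin] at h1
      have : dt (-n) (coeLat v) = - dt n (coeLat v) := by simp [dt]; ring
      linarith
  have hy : ∀ x, dt (-(1 / l x0) • n) x = - (l x / l x0) := by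
    intro x; rw [hlin x]; simp [dt]; field_simp; ring
  have hy1 : ∀ x ∈ Δ, -1 ≤ dt (-(1 / l x0) • n) x := by
    intro x hx
    rw [hy]
    have := hx0'.2 x hx
    have h2 : l x / l x0 ≤ 1 := (div_le_one hμ).2 this
    linarith
  obtain ⟨v, hv0, hv⟩ := finrank_eq_one_iff'.1 hd
  have hi : ∃ i, (v : Fin 3 → ℝ) i ≠ 0 := by
    by_contra hcon
    push Not at hcon
    exact hv0 (Subtype.ext (funext hcon))
  obtain ⟨i, hi⟩ := hi
  refine ⟨-(1 / l x0) • n, i, fun j => (v : Fin 3 → ℝ) j / (v : Fin 3 → ℝ) i, ?_, ?_, ?_⟩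
  · intro x hx; rw [dt_sum]; exact hy1 x hx
  · ext x
    constructor
    · intro hx
      rw [hl] at hx
      refine ⟨hx.1, ?_⟩
      rw [hy]
      have h1 := hx.2 x0 hx0'.1
      have h2 := hx0'.2 x hx.1
      have : l x = l x0 := le_antisymm h2 h1
      rw [this, div_self hμ.ne']
    · rintro ⟨hx, h1⟩
      rw [hl]
      refine ⟨hx, fun y hyΔ => ?_⟩
      rw [hy] at h1
      have h2 : l x / l x0 = 1 := by linarith
      rw [div_eq_one_iff_eq hμ.ne'] at h2
      rw [h2]; exact hx0'.2 y hyΔ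
  · intro x hx x' hx' j
    have hmem : x - x' ∈ (affineSpan ℝ θ).direction := by
      have := AffineSubspace.vsub_mem_direction (subset_affineSpan ℝ θ hx) (subset_affineSpan ℝ θ hx')
      simpa using this
    obtain ⟨k, hk⟩ := hv ⟨x - x', hmem⟩
    have hk' : ∀ j, x j - x' j = k * (v : Fin 3 → ℝ) j := by
      intro j
      have := congrFun (congrArg Subtype.val hk) j
      simp at this
      exact this.symm
    rw [hk' j, hk' i]; field_simp

section
variable {θ : Set (Fin 3 → ℝ)} {y0 w : Fin 3 → ℝ} {i : Fin 3}

lemma EdgeForm.memV (hr : RData Δ V) (hf : EdgeForm Δ θ y0 i w) {p : Fin 3 → ℤ}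
    (hp : p ∈ latticePoints θ) : p ∈ V := by
  have h : coeLat p ∈ θ := hp
  rw [hf.eq] at h
  refine (hr.memV p).2 ⟨?_, h.1⟩
  rintro rfl
  have := h.2
  simp [dt, coeLat] at this

lemma EdgeForm.inj (hf : EdgeForm Δ θ y0 i w) {p q : Fin 3 → ℤ}
    (hp : p ∈ latticePoints θ) (hq : q ∈ latticePoints θ) (h : p i = q i) : p = q := by
  apply coeLat_inj
  funext j
  have := hf.col _ hp _ hq j
  have h2 : coeLat p i = coeLat q i := by simp [coeLat, h]
  rw [h2] at this
  linarith

lemma EdgeForm.between (hf : EdgeForm Δ θ y0 i w) {a b : Fin 3 → ℤ} {x : Fin 3 → ℝ}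
    (ha : a ∈ latticePoints θ) (hb : b ∈ latticePoints θ) (hx : x ∈ θ) (hab : a i ≠ b i) :
    x = (1 - (x i - a i) / (b i - a i)) • coeLat a + ((x i - a i) / (b i - a i)) • coeLat b := by
  have hne : (b i : ℝ) - a i ≠ 0 := by
    rw [sub_ne_zero]; exact_mod_cast hab.symm
  funext j
  have h1 := hf.col _ hx _ ha j
  have h2 := hf.col _ hb _ ha j
  simp only [Pi.add_apply, Pi.smul_apply, smul_eq_mul]
  simp only [coeLat] at h1 h2 ⊢
  field_simp
  linear_combination (↑(b i) - ↑(a i)) * h1 - (x i - ↑(a i)) * h2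

lemma EdgeForm.edg_between (hr : RData Δ V) (hg : Good V lam) (hf : EdgeForm Δ θ y0 i w)
    {a b p : Fin 3 → ℤ} (h : Edg V lam a b) (ha : a ∈ latticePoints θ) (hb : b ∈ latticePoints θ)
    (hp : p ∈ latticePoints θ) (h1 : a i < p i) (h2 : p i < b i) : False := by
  have h3 : (a i : ℝ) < p i := by exact_mod_cast h1
  have h4 : (p i : ℝ) < b i := by exact_mod_cast h2
  have hc := hf.between ha hb (x := coeLat p) hp (by omega)
  have hpos : (0 : ℝ) < b i - a i := by linarith
  rcases h.no_between hr hg (hf.memV hr hp) _ (div_nonneg (by simp [coeLat]; linarith) hpos.le)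
    ((div_le_one hpos).2 (by simp [coeLat]; linarith)) hc with rfl | rfl
  · omega
  · omega

/-- two lattice points with sum on an edge of a triangle -/
lemma EdgeForm.cons_aux (hr : RData Δ V) (hg : Good V lam) (hf : EdgeForm Δ θ y0 i w)
    {a b p q : Fin 3 → ℤ} (h : Edg V lam p q) (ha : a ∈ latticePoints θ) (hb : b ∈ latticePoints θ)
    (hp : p ∈ latticePoints θ) (hq : q ∈ latticePoints θ) (hab : a i < b i)
    (hcons : ∀ x ∈ latticePoints θ, a i < x i → x i < b i → False)
    (hsum : a i + b i = p i + q i) : Edg V lam a b := by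
  have main : ∀ p q, Edg V lam p q → p ∈ latticePoints θ → q ∈ latticePoints θ → p i ≤ q i →
      a i + b i = p i + q i → Edg V lam a b := by
    intro p q h hp hq hpq hsum
    rcases lt_trichotomy (p i) (a i) with h1 | h1 | h1
    · exact (hf.edg_between hr hg h hp hq ha h1 (by omega)).elim
    · have e1 := hf.inj hp ha h1
      have e2 := hf.inj hq hb (by omega)
      rwa [e1, e2] at h
    · exact (hcons p hp h1 (by omega)).elim
  rcases le_total (p i) (q i) with h1 | h1
  · exact main p q h hp hq h1 hsum
  · exact main q p (h.symm hr hg) hq hp h1 (by omega)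

/-- consecutive lattice points of an edge form an edge of the triangulation -/
lemma EdgeForm.cons (hr : RData Δ V) (hg : Good V lam) (hf : EdgeForm Δ θ y0 i w)
    {a b : Fin 3 → ℤ} (ha : a ∈ latticePoints θ) (hb : b ∈ latticePoints θ) (hab : a i < b i)
    (hcons : ∀ x ∈ latticePoints θ, a i < x i → x i < b i → False) : Edg V lam a b := by
  obtain ⟨p, q, r, hT, k1, k2, k3⟩ := Tri_cover hr.setup hg (coeLat (a + b))
  have hD := Tri_uni hr.setup hg hT
  have hT2 := (Tri_cyc hr.setup hg).rot _ _ _ hT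
  have hT3 := (Tri_cyc hr.setup hg).rot _ _ _ hT2
  obtain ⟨m, mp, mq, mr, mv⟩ := Tri_fun hr.setup hg hT
  obtain ⟨hp, hq, hrV, -⟩ := mem_Tri.1 hT
  rw [D3_coe] at k1 k2 k3
  have n1 : 0 ≤ Dz q r (a + b) := by exact_mod_cast k1
  have n2 : 0 ≤ Dz r p (a + b) := by exact_mod_cast k2
  have n3 : 0 ≤ Dz p q (a + b) := by exact_mod_cast k3
  have hx : ∀ j, a j + b j = Dz q r (a + b) * p j + Dz r p (a + b) * q j + Dz p q (a + b) * r j := by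
    intro j
    have : Dz p q r * (a j + b j) =
        Dz q r (a + b) * p j + Dz r p (a + b) * q j + Dz p q (a + b) * r j := by
      fin_cases j <;> simp [Dz] <;> ring
    rw [hD, one_mul] at this; exact this
  generalize Dz q r (a + b) = x at *
  generalize Dz r p (a + b) = y at *
  generalize Dz p q (a + b) = z at *
  have haV := hf.memV hr ha
  have hbV := hf.memV hr hb
  have ha1 : coeLat a ∈ θ := ha
  have hb1 : coeLat b ∈ θ := hb
  have hin : ∀ v ∈ V, dt y0 (coeLat v) = -1 → v ∈ latticePoints θ := by
    intro v hv h
    change coeLat v ∈ θ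
    rw [hf.eq]; exact ⟨((hr.memV v).1 hv).2, h⟩
  have hy0 := (hr.polar y0).1 hf.hy
  rw [hf.eq] at ha1 hb1
  have hle : x + y + z ≤ 2 := by
    have e : dz m a + dz m b = x * dz m p + y * dz m q + z * dz m r := by
      simp only [dz]; linear_combination m 0 * hx 0 + m 1 * hx 1 + m 2 * hx 2
    rw [mp, mq, mr] at e
    have := mv a haV
    have := mv b hbV
    linarith
  have hsum : (-2 : ℝ) = x * dt y0 (coeLat p) + y * dt y0 (coeLat q) + z * dt y0 (coeLat r) := by
    have hxR : ∀ j, (a j : ℝ) + b j = x * p j + y * q j + z * r j := by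
      intro j; exact_mod_cast hx j
    have e : dt y0 (coeLat a) + dt y0 (coeLat b) =
      x * dt y0 (coeLat p) + y * dt y0 (coeLat q) + z * dt y0 (coeLat r) := by
      simp only [dt, coeLat]; linear_combination y0 0 * hxR 0 + y0 1 * hxR 1 + y0 2 * hxR 2
    rw [← e, ha1.2, hb1.2]; norm_num
  have hx0 : (0 : ℝ) ≤ x := by exact_mod_cast n1
  have hy0' : (0 : ℝ) ≤ y := by exact_mod_cast n2
  have hz0 : (0 : ℝ) ≤ z := by exact_mod_cast n3
  have hleR : (x : ℝ) + y + z ≤ 2 := by exact_mod_cast hle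
  have q1 := mul_nonneg hx0 (sub_nonneg.2 (hy0 p hp))
  have q2 := mul_nonneg hy0' (sub_nonneg.2 (hy0 q hq))
  have q3 := mul_nonneg hz0 (sub_nonneg.2 (hy0 r hrV))
  have heqR : (x : ℝ) + y + z = 2 := by linarith
  have heq : x + y + z = 2 := by exact_mod_cast heqR
  have tp : 0 < x → p ∈ latticePoints θ := by
    intro h
    apply hin p hp
    have h' : (0 : ℝ) < x := by exact_mod_cast h
    have : (x : ℝ) * (dt y0 (coeLat p) - -1) = 0 := by linarith
    have := (mul_eq_zero.1 this).resolve_left h'.ne'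
    linarith
  have tq : 0 < y → q ∈ latticePoints θ := by
    intro h
    apply hin q hq
    have h' : (0 : ℝ) < y := by exact_mod_cast h
    have : (y : ℝ) * (dt y0 (coeLat q) - -1) = 0 := by linarith
    have := (mul_eq_zero.1 this).resolve_left h'.ne'
    linarith
  have tr : 0 < z → r ∈ latticePoints θ := by
    intro h
    apply hin r hrV
    have h' : (0 : ℝ) < z := by exact_mod_cast h
    have : (z : ℝ) * (dt y0 (coeLat r) - -1) = 0 := by linarith
    have := (mul_eq_zero.1 this).resolve_left h'.ne'
    linarith
  have hi := hx i
  have hx2 : x ≤ 2 := by omega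
  have hy2 : y ≤ 2 := by omega
  have hz' : z = 2 - x - y := by omega
  subst hz'
  interval_cases x <;> interval_cases y <;> first
    | omega
    | (exfalso; refine hcons p (tp (by norm_num)) ?_ ?_ <;> omega)
    | (exfalso; refine hcons q (tq (by norm_num)) ?_ ?_ <;> omega)
    | (exfalso; refine hcons r (tr (by norm_num)) ?_ ?_ <;> omega)
    | exact hf.cons_aux hr hg ⟨r, hT⟩ ha hb (tp (by norm_num)) (tq (by norm_num)) hab hcons (by omega)
    | exact hf.cons_aux hr hg ⟨p, hT2⟩ ha hb (tq (by norm_num)) (tr (by norm_num)) hab hcons (by omega)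
    | exact hf.cons_aux hr hg ⟨q, hT3⟩ ha hb (tr (by norm_num)) (tp (by norm_num)) hab hcons (by omega)

end

/-! ### Counting -/

lemma count_edges {α : Type*} [DecidableEq α] (L : Finset α) (P : Finset (α × α)) (f : α → ℤ)
    (hinj : ∀ a ∈ L, ∀ b ∈ L, f a = f b → a = b)
    (hP : ∀ a b, (a, b) ∈ P → a ∈ L ∧ b ∈ L ∧ a ≠ b)
    (hsymm : ∀ a b, (a, b) ∈ P → (b, a) ∈ P)
    (hnb : ∀ a b, (a, b) ∈ P → ∀ x ∈ L, f a < f x → f x < f b → False)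
    (hcons : ∀ a ∈ L, ∀ b ∈ L, f a < f b → (∀ x ∈ L, f a < f x → f x < f b → False) → (a, b) ∈ P)
    (hne : L.Nonempty) : P.card + 2 = 2 * L.card := by
  classical
  obtain ⟨m, hm, hmin⟩ := L.exists_min_image f hne
  have c1 : (P.filter (fun e => f e.1 < f e.2)).card = (L.erase m).card := by
    refine Finset.card_bij (fun e _ => e.2) ?_ ?_ ?_
    · rintro ⟨a, b⟩ h
      obtain ⟨h, hlt⟩ := Finset.mem_filter.1 h
      obtain ⟨ha, hb, -⟩ := hP a b h
      refine Finset.mem_erase.2 ⟨?_, hb⟩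
      rintro rfl
      have := hmin a ha
      simp only at hlt this
      omega
    · rintro ⟨a, b⟩ h ⟨a', b'⟩ h' heq
      obtain ⟨h, hlt⟩ := Finset.mem_filter.1 h
      obtain ⟨h', hlt'⟩ := Finset.mem_filter.1 h'
      simp only at heq hlt hlt'
      subst heq
      obtain ⟨ha, hb, -⟩ := hP _ _ h
      obtain ⟨ha', -, -⟩ := hP _ _ h'
      rcases lt_trichotomy (f a) (f a') with h1 | h1 | h1
      · exact (hnb _ _ h a' ha' h1 hlt').elim
      · rw [hinj a ha a' ha' h1]
      · exact (hnb _ _ h' a ha h1 hlt).elim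
    · intro b hb
      obtain ⟨hbm, hb⟩ := Finset.mem_erase.1 hb
      have hlt : f m < f b := by
        refine lt_of_le_of_ne (hmin b hb) (fun h => hbm (hinj b hb m hm h.symm))
      obtain ⟨a, ha, hmax⟩ := (L.filter (fun x => f x < f b)).exists_max_image f
        ⟨m, Finset.mem_filter.2 ⟨hm, hlt⟩⟩
      obtain ⟨ha, hab⟩ := Finset.mem_filter.1 ha
      refine ⟨(a, b), Finset.mem_filter.2 ⟨hcons a ha b hb hab ?_, hab⟩, rfl⟩
      intro x hx h1 h2
      have := hmax x (Finset.mem_filter.2 ⟨hx, h2⟩)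
      omega
  have c2 : (P.filter (fun e => ¬ f e.1 < f e.2)).card =
      (P.filter (fun e => f e.1 < f e.2)).card := by
    refine Finset.card_bij (fun e _ => (e.2, e.1)) ?_ ?_ ?_
    · rintro ⟨a, b⟩ h
      obtain ⟨h, hlt⟩ := Finset.mem_filter.1 h
      obtain ⟨ha, hb, hab⟩ := hP a b h
      refine Finset.mem_filter.2 ⟨hsymm _ _ h, ?_⟩
      have : f a ≠ f b := fun h => hab (hinj a ha b hb h)
      simp only at hlt ⊢
      omega
    · rintro ⟨a, b⟩ h ⟨a', b'⟩ h' heq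
      simp only [Prod.mk.injEq] at heq ⊢
      exact ⟨heq.2, heq.1⟩
    · rintro ⟨a, b⟩ h
      obtain ⟨h, hlt⟩ := Finset.mem_filter.1 h
      refine ⟨(b, a), Finset.mem_filter.2 ⟨hsymm _ _ h, ?_⟩, rfl⟩
      simp only at hlt ⊢
      omega
  have c3 := Finset.card_filter_add_card_filter_not (s := P) (fun e => f e.1 < f e.2)
  have c4 := Finset.card_erase_of_mem hm
  have c5 : 0 < L.card := Finset.card_pos.2 hne
  omega

open Classical in
/-- the finite set of oriented edges -/
def ESet (V : Finset (Fin 3 → ℤ)) (lam : (Fin 3 → ℤ) → ℝ) :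
    Finset ((Fin 3 → ℤ) × (Fin 3 → ℤ)) :=
  (Tri V lam).image (fun t => (t.1, t.2.1))

lemma mem_ESet {V : Finset (Fin 3 → ℤ)} {lam : (Fin 3 → ℤ) → ℝ} {a b : Fin 3 → ℤ} :
    (a, b) ∈ ESet V lam ↔ Edg V lam a b := by
  classical
  unfold ESet Edg
  rw [Finset.mem_image]
  constructor
  · rintro ⟨⟨a', b', c⟩, h, heq⟩
    simp only [Prod.mk.injEq] at heq
    obtain ⟨rfl, rfl⟩ := heq
    exact ⟨c, h⟩
  · rintro ⟨c, h⟩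
    exact ⟨_, h, rfl⟩

section
variable {Δ : Set (Fin 3 → ℝ)} {V : Finset (Fin 3 → ℤ)} {lam : (Fin 3 → ℤ) → ℝ}
variable {θ : Set (Fin 3 → ℝ)} {y0 w : Fin 3 → ℝ} {i : Fin 3}

lemma sum48E (hr : RData Δ V) (hg : Good V lam) :
    ∑ e ∈ ESet V lam, (((latticePoints (EStar Δ e.1 e.2)).ncard : ℝ) - 1) = 48 := by
  classical
  rw [← sum48 hr hg]
  unfold ESet
  rw [Finset.sum_image]
  rintro ⟨a, b, c⟩ h ⟨a', b', c'⟩ h' heq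
  simp only [Prod.mk.injEq] at heq
  obtain ⟨rfl, rfl⟩ := heq
  have := (Tri_cyc hr.setup hg).uniq _ _ _ _ h h'
  rw [this]

lemma Edg.memV {a b : Fin 3 → ℤ} (h : Edg V lam a b) : a ∈ V ∧ b ∈ V := by
  obtain ⟨c, h⟩ := h
  obtain ⟨ha, hb, -⟩ := mem_Tri.1 h
  exact ⟨ha, hb⟩

lemma EdgeForm.finite (hr : RData Δ V) (hf : EdgeForm Δ θ y0 i w) : (latticePoints θ).Finite :=
  V.finite_toSet.subset (fun _ hp => hf.memV hr hp)

lemma EdgeForm.nonempty (hr : RData Δ V) (hf : EdgeForm Δ θ y0 i w) (hne : θ.Nonempty) :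
    (latticePoints θ).Nonempty := by
  by_contra hcon
  rw [Set.not_nonempty_iff_eq_empty] at hcon
  have hsub : Δ ⊆ {x | -1 < dt y0 x} := by
    apply hr.hull
    · exact convex_halfSpace_gt (dtlin y0).isLinear (-1)
    · simp [dt]
    · intro v hv
      have h1 := (hr.polar y0).1 hf.hy v hv
      refine lt_of_le_of_ne h1 (fun heq => ?_)
      have : v ∈ latticePoints θ := by
        change coeLat v ∈ θ
        rw [hf.eq]; exact ⟨((hr.memV v).1 hv).2, heq.symm⟩
      rw [hcon] at this; exact this
  obtain ⟨x, hx⟩ := hne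
  rw [hf.eq] at hx
  have h1 := hsub hx.1
  have h2 := hx.2
  simp only [Set.mem_ofPred_eq] at h1
  linarith

open Classical in
lemma EdgeForm.count (hr : RData Δ V) (hg : Good V lam) (hf : EdgeForm Δ θ y0 i w)
    (hne : θ.Nonempty) :
    ((ESet V lam).filter (fun e => e.1 ∈ latticePoints θ ∧ e.2 ∈ latticePoints θ)).card + 2 =
      2 * (latticePoints θ).ncard := by
  have hfin := hf.finite hr
  rw [Set.ncard_eq_toFinset_card _ hfin]
  apply count_edges _ _ (fun p => p i)
  · intro a ha b hb h
    exact hf.inj (hfin.mem_toFinset.1 ha) (hfin.mem_toFinset.1 hb) h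
  · intro a b h
    obtain ⟨h, ha, hb⟩ := Finset.mem_filter.1 h
    exact ⟨hfin.mem_toFinset.2 ha, hfin.mem_toFinset.2 hb, (mem_ESet.1 h).ne hr hg⟩
  · intro a b h
    obtain ⟨h, ha, hb⟩ := Finset.mem_filter.1 h
    exact Finset.mem_filter.2 ⟨mem_ESet.2 ((mem_ESet.1 h).symm hr hg), hb, ha⟩
  · intro a b h x hx h1 h2
    obtain ⟨h, ha, hb⟩ := Finset.mem_filter.1 h
    exact hf.edg_between hr hg (mem_ESet.1 h) ha hb (hfin.mem_toFinset.1 hx) h1 h2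
  · intro a ha b hb hab hc
    have ha := hfin.mem_toFinset.1 ha
    have hb := hfin.mem_toFinset.1 hb
    refine Finset.mem_filter.2 ⟨mem_ESet.2 (hf.cons hr hg ha hb hab ?_), ha, hb⟩
    intro x hx
    exact hc x (hfin.mem_toFinset.2 hx)
  · obtain ⟨p, hp⟩ := hf.nonempty hr hne
    exact ⟨p, hfin.mem_toFinset.2 hp⟩

lemma EdgeForm.dt_eq (hf : EdgeForm Δ θ y0 i w) {a b : Fin 3 → ℤ} (ha : a ∈ latticePoints θ)
    (hb : b ∈ latticePoints θ) (hab : a ≠ b) {y x : Fin 3 → ℝ} (ya : dt y (coeLat a) = -1)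
    (yb : dt y (coeLat b) = -1) (hx : x ∈ θ) : dt y x = -1 := by
  have h := hf.between ha hb hx (fun h => hab (hf.inj ha hb h))
  generalize (x i - a i) / (b i - a i) = s at h
  have e : dt y x = (1 - s) * dt y (coeLat a) + s * dt y (coeLat b) := by
    rw [h]; simp only [dt, Pi.add_apply, Pi.smul_apply, smul_eq_mul]; ring
  rw [e, ya, yb]; ring

lemma EdgeForm.dual_eq (hf : EdgeForm Δ θ y0 i w) {a b : Fin 3 → ℤ} (ha : a ∈ latticePoints θ)
    (hb : b ∈ latticePoints θ) (hab : a ≠ b) : dualFace Δ θ = EStar Δ a b := by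
  ext y
  constructor
  · rintro ⟨h1, h2⟩
    refine ⟨h1, ?_, ?_⟩
    · rw [← dt_sum]; exact h2 _ ha
    · rw [← dt_sum]; exact h2 _ hb
  · rintro ⟨h1, h2, h3⟩
    refine ⟨h1, fun x hx => ?_⟩
    rw [dt_sum]
    exact hf.dt_eq ha hb hab h2 h3 hx

lemma EdgeForm.Th_eq (hf : EdgeForm Δ θ y0 i w) {a b : Fin 3 → ℤ} (ha : a ∈ latticePoints θ)
    (hb : b ∈ latticePoints θ) (hab : a ≠ b) : Th Δ a b = θ := by
  have ha1 : coeLat a ∈ θ := ha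
  have hb1 : coeLat b ∈ θ := hb
  rw [hf.eq] at ha1 hb1
  ext x
  constructor
  · rintro ⟨h1, h2⟩
    rw [hf.eq]
    exact ⟨h1, h2 y0 ⟨hf.hy, ha1.2, hb1.2⟩⟩
  · intro hx
    refine ⟨?_, fun y hy => hf.dt_eq ha hb hab hy.2.1 hy.2.2 hx⟩
    rw [hf.eq] at hx; exact hx.1

lemma Edg.mem_Th (hr : RData Δ V) {a b : Fin 3 → ℤ} (h : Edg V lam a b) :
    a ∈ latticePoints (Th Δ a b) ∧ b ∈ latticePoints (Th Δ a b) := by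
  obtain ⟨ha, hb⟩ := h.memV
  exact ⟨⟨((hr.memV a).1 ha).2, fun y hy => hy.2.1⟩, ⟨((hr.memV b).1 hb).2, fun y hy => hy.2.2⟩⟩

lemma Th_face (hr : RData Δ V) (hg : Good V lam) {a b : Fin 3 → ℤ} (h : Edg V lam a b)
    (hl0 : ((latticePoints (EStar Δ a b)).ncard : ℝ) - 1 ≠ 0) : IsFaceOfDim Δ 1 (Th Δ a b) := by
  have hmem := h.mem_Th hr
  have hab := h.ne hr hg
  obtain ⟨c, hT⟩ := h
  obtain ⟨d, hd⟩ := (Tri_cyc hr.setup hg).adj _ _ _ hT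
  obtain ⟨m, l, hl, ma, mb, mc, mv, mv', md, hD, hD'⟩ := edge_data hr hg hT hd
  rw [EStar_lattice hr (mem_Tri.1 hT).2.2.1 (mem_Tri.1 hd).2.2.1 hl ma mb mc mv mv' md hD hD'] at hl0
  have hU := (Tri_cyc hr.setup hg).uni _ _ _ hT
  set A := coeLat a with hA
  set B := coeLat b with hB
  set C := coeLat c with hC
  have hm' : ∀ x, dt (coeLat m + (l : ℝ) • cr A B) x = dt (coeLat m) x + l * D3 A B x := by
    intro x; rw [D3_eq_dt]; simp only [dt, Pi.add_apply, Pi.smul_apply, smul_eq_mul]; ring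
  have maR : dt (coeLat m) A = -1 := by rw [hA, dt_coe, ma]; simp
  have mbR : dt (coeLat m) B = -1 := by rw [hB, dt_coe, mb]; simp
  have mcR : dt (coeLat m) C = -1 := by rw [hC, dt_coe, mc]; simp
  have z1 : D3 A B A = 0 := by unfold D3; ring
  have z2 : D3 A B B = 0 := by unfold D3; ring
  have M1 : coeLat m ∈ EStar Δ a b := by
    refine ⟨(hr.polar _).2 (fun v hv => ?_), maR, mbR⟩
    rw [dt_coe]; exact_mod_cast mv v hv
  have M2 : coeLat m + (l : ℝ) • cr A B ∈ EStar Δ a b := by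
    refine ⟨(hr.polar _).2 (fun v hv => ?_), ?_, ?_⟩
    · rw [hm', hA, hB, D3_coe, dt_coe]; exact_mod_cast mv' v hv
    · rw [hm', maR, z1]; ring
    · rw [hm', mbR, z2]; ring
  -- reconstruct functionals
  have hrec : ∀ y ∈ EStar Δ a b, ∀ x, dt y x = dt (coeLat m) x + (dt y C + 1) * D3 A B x := by
    intro y hy x
    have c1 := cramer_dt A B C x y
    have c2 := cramer_dt A B C x (coeLat m)
    rw [hU, hy.2.1, hy.2.2] at c1
    rw [hU, maR, mbR, mcR] at c2
    linarith
  have hle : ∀ y ∈ polarDual Δ, ∀ x ∈ Δ, -1 ≤ dt y x := by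
    intro y hy x hx; rw [← dt_sum]; exact hy x hx
  have hThiff : ∀ x ∈ Δ, (x ∈ Th Δ a b ↔ 2 * dt (coeLat m) x + l * D3 A B x = -2) := by
    intro x hx
    constructor
    · intro h
      have h1 := h.2 _ M1
      have h2 := h.2 _ M2
      rw [hm'] at h2
      linarith
    · intro h
      have h1 := hle _ M1.1 x hx
      have h2 := hle _ M2.1 x hx
      rw [hm'] at h2
      have h3 : dt (coeLat m) x = -1 := by linarith
      have h4 : l * D3 A B x = 0 := by linarith
      have h5 : D3 A B x = 0 := (mul_eq_zero.1 h4).resolve_left hl0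
      refine ⟨hx, fun y hy => ?_⟩
      rw [hrec y hy, h3, h5]; ring
  have hge : ∀ x ∈ Δ, -2 ≤ 2 * dt (coeLat m) x + l * D3 A B x := by
    intro x hx
    have h1 := hle _ M1.1 x hx
    have h2 := hle _ M2.1 x hx
    rw [hm'] at h2
    linarith
  let φ : (Fin 3 → ℝ) →ₗ[ℝ] ℝ := dtlin (-(2 : ℝ) • coeLat m - (l : ℝ) • cr A B)
  have hφ : ∀ x, φ x = -(2 * dt (coeLat m) x + l * D3 A B x) := by
    intro x
    simp only [φ, dtlin_apply, D3_eq_dt]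
    simp only [dt, Pi.sub_apply, Pi.smul_apply, smul_eq_mul]; ring
  have hAΔ : A ∈ Th Δ a b := hmem.1
  have hBΔ : B ∈ Th Δ a b := hmem.2
  refine ⟨fun _ => ⟨LinearMap.toContinuousLinearMap φ, ?_⟩, ⟨A, hAΔ⟩, ?_⟩
  · ext x
    constructor
    · intro hx
      refine ⟨hx.1, fun y hy => ?_⟩
      change φ y ≤ φ x
      rw [hφ, hφ, (hThiff x hx.1).1 hx]
      have := hge y hy
      linarith
    · rintro ⟨hx, h⟩
      refine (hThiff x hx).2 ?_
      have h1 : φ A ≤ φ x := h A hAΔ.1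
      rw [hφ, hφ, (hThiff A hAΔ.1).1 hAΔ] at h1
      have := hge x hx
      linarith
  · unfold dimSet
    rw [direction_affineSpan]
    have hspan : vectorSpan ℝ (Th Δ a b) = Submodule.span ℝ {B - A} := by
      rw [vectorSpan_eq_span_vsub_set_right ℝ hAΔ]
      apply le_antisymm
      · rw [Submodule.span_le]
        rintro _ ⟨x, hx, rfl⟩
        have k1 : dt (coeLat m) x = -1 := hx.2 _ M1
        have k2 := hx.2 _ M2
        rw [hm', k1] at k2
        have h4 : l * D3 A B x = 0 := by linarith
        have h5 : D3 A B x = 0 := (mul_eq_zero.1 h4).resolve_left hl0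
        have c1 := cramer_dt A B C x (coeLat m)
        rw [hU, maR, mbR, mcR, k1, h5] at c1
        refine Submodule.mem_span_singleton.2 ⟨D3 C A x, ?_⟩
        funext j
        have c2 := cramer_dt A B C x (Pi.single j 1)
        have hs : ∀ z : Fin 3 → ℝ, dt (Pi.single j 1) z = z j := by
          intro z; rw [← dt_sum]; simp [Pi.single_apply]
        rw [hU, hs, hs, hs, hs, h5] at c2
        simp only [Pi.smul_apply, Pi.sub_apply, smul_eq_mul, vsub_eq_sub]
        have c3 : D3 B C x = 1 - D3 C A x := by linarith
        rw [c3] at c2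
        linarith
      · rw [Submodule.span_le, Set.singleton_subset_iff]
        exact Submodule.subset_span ⟨B, hBΔ, rfl⟩
    rw [hspan]
    apply finrank_span_singleton
    intro h0
    exact hab (coeLat_inj (sub_eq_zero.1 h0).symm)

theorem final (hr : RData Δ V) (hg : Good V lam) (hdim : dimSet Δ = 3) :
    ∑ᶠ θ ∈ {θ : Set (Fin 3 → ℝ) | IsFaceOfDim Δ 1 θ},
      (((latticePoints θ).ncard : ℝ) - 1) *
        (((latticePoints (dualFace Δ θ)).ncard : ℝ) - 1) = 24 := by
  classical
  let T : Finset (Set (Fin 3 → ℝ)) :=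
    ((ESet V lam).image (fun e => Th Δ e.1 e.2)).filter (fun θ => IsFaceOfDim Δ 1 θ)
  have hex : ∀ θ, IsFaceOfDim Δ 1 θ → (((latticePoints θ).ncard : ℝ) - 1) ≠ 0 → θ ∈ T := by
    intro θ hθ h1
    obtain ⟨y0, i, w, hf⟩ := exists_edgeForm hr hdim hθ
    have hc := hf.count hr hg hθ.2.1
    have hn : (latticePoints θ).ncard ≠ 1 := fun h => h1 (by rw [h]; simp)
    obtain ⟨⟨a, b⟩, he⟩ : ((ESet V lam).filter
        (fun e => e.1 ∈ latticePoints θ ∧ e.2 ∈ latticePoints θ)).Nonempty := by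
      rw [← Finset.card_pos]; omega
    obtain ⟨he, ha, hb⟩ := Finset.mem_filter.1 he
    refine Finset.mem_filter.2 ⟨Finset.mem_image.2 ⟨(a, b), he, ?_⟩, hθ⟩
    exact hf.Th_eq ha hb ((mem_ESet.1 he).ne hr hg)
  rw [finsum_mem_eq_sum_of_inter_support_eq (t := T)]
  · have h48 := sum48E hr hg
    have hfib : ∀ θ ∈ T, 2 * ((((latticePoints θ).ncard : ℝ) - 1) *
        (((latticePoints (dualFace Δ θ)).ncard : ℝ) - 1)) =
        ∑ e ∈ (ESet V lam).filter (fun e => Th Δ e.1 e.2 = θ),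
          (((latticePoints (EStar Δ e.1 e.2)).ncard : ℝ) - 1) := by
      intro θ hθT
      have hθ := (Finset.mem_filter.1 hθT).2
      obtain ⟨y0, i, w, hf⟩ := exists_edgeForm hr hdim hθ
      have hc := hf.count hr hg hθ.2.1
      have hset : (ESet V lam).filter (fun e => Th Δ e.1 e.2 = θ) =
          (ESet V lam).filter (fun e => e.1 ∈ latticePoints θ ∧ e.2 ∈ latticePoints θ) := by
        apply Finset.filter_congr
        rintro ⟨a, b⟩ he
        constructor
        · intro h
          rw [← h]; exact (mem_ESet.1 he).mem_Th hr
        · rintro ⟨ha, hb⟩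
          exact hf.Th_eq ha hb ((mem_ESet.1 he).ne hr hg)
      rw [hset]
      have hconst : ∀ e ∈ (ESet V lam).filter
          (fun e => e.1 ∈ latticePoints θ ∧ e.2 ∈ latticePoints θ),
          (((latticePoints (EStar Δ e.1 e.2)).ncard : ℝ) - 1) =
          (((latticePoints (dualFace Δ θ)).ncard : ℝ) - 1) := by
        rintro ⟨a, b⟩ he
        obtain ⟨he, ha, hb⟩ := Finset.mem_filter.1 he
        rw [hf.dual_eq ha hb ((mem_ESet.1 he).ne hr hg)]
      rw [Finset.sum_congr rfl hconst, Finset.sum_const, nsmul_eq_mul]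
      have hcR : (((ESet V lam).filter
          (fun e => e.1 ∈ latticePoints θ ∧ e.2 ∈ latticePoints θ)).card : ℝ) + 2 =
          2 * (latticePoints θ).ncard := by exact_mod_cast hc
      rw [← mul_assoc]
      congr 1
      linarith
    have h2 : ∑ θ ∈ T, 2 * ((((latticePoints θ).ncard : ℝ) - 1) *
        (((latticePoints (dualFace Δ θ)).ncard : ℝ) - 1)) = 48 := by
      rw [Finset.sum_congr rfl hfib, ← h48]
      rw [← Finset.sum_filter_of_ne (s := ESet V lam) (p := fun e => Th Δ e.1 e.2 ∈ T)]
      · rw [← Finset.sum_fiberwise_of_maps_to (s := (ESet V lam).filter (fun e => Th Δ e.1 e.2 ∈ T))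
          (t := T) (g := fun e => Th Δ e.1 e.2) (fun e he => (Finset.mem_filter.1 he).2)]
        refine Finset.sum_congr rfl (fun θ hθ => ?_)
        refine Finset.sum_congr ?_ (fun _ _ => rfl)
        rw [Finset.filter_filter]
        apply Finset.filter_congr
        intro e _
        constructor
        · intro h; exact ⟨by rw [h]; exact hθ, h⟩
        · intro h; exact h.2
      · rintro ⟨a, b⟩ he hne
        exact Finset.mem_filter.2 ⟨Finset.mem_image.2 ⟨(a, b), he, rfl⟩,
          Th_face hr hg (mem_ESet.1 he) hne⟩
    rw [← Finset.mul_sum] at h2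
    linarith
  · ext θ
    simp only [Set.mem_inter_iff, Function.mem_support, Set.mem_ofPred_eq, Finset.mem_coe]
    constructor
    · rintro ⟨h1, h2⟩
      exact ⟨hex θ h1 (left_ne_zero_of_mul h2), h2⟩
    · rintro ⟨h1, h2⟩
      exact ⟨(Finset.mem_filter.1 h1).2, h2⟩

end

theorem reflexive_3d_twentyfour (Δ : Set (Fin 3 → ℝ))
    (hΔ : IsReflexive Δ) (hdim : dimSet Δ = 3) :
    ∑ᶠ θ ∈ {θ : Set (Fin 3 → ℝ) | IsFaceOfDim Δ 1 θ},
      (((latticePoints θ).ncard : ℝ) - 1) *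
        (((latticePoints (dualFace Δ θ)).ncard : ℝ) - 1) = 24 := by
  obtain ⟨V, hr⟩ := reflexive_data Δ hΔ
  obtain ⟨lam, hg⟩ := exists_good V
  exact final hr hg hdim

end
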